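/- Let 1 < p < ∞ and n ≥ 1. There exists a constant C_3 = C_3(n,p) > 0 with the following property. Let U ⊂ ℝ^n be a nonempty open, bounded, connected set and let u ∈ W^{1,∞}(U,ℝ^n) be essentially injective with diam(u(U)) ≤ d and 0 < λ ≤ det Du(x) ≤ Λ for a.e. x ∈ U. Then there exists a bounded Lipschitz map S : U → ℝ^n that is essentially injective and measure preserving such that ∫_U |u(x) − S(x)|^p dx ≤ C_3 · (d/λ^{1/n})^p (1 + λ^{−p}(Λ/λ)^{2p−2}) · ∫_U |1 − det Du(x)|^p dx. -/

import Mathlib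

open MeasureTheory Metric Set Bornology

noncomputable section

/-- The Jacobian determinant of `u` at `x` (junk value if `u` is not differentiable at `x`). -/
def detD {n : ℕ} (u : EuclideanSpace ℝ (Fin n) → EuclideanSpace ℝ (Fin n))
    (x : EuclideanSpace ℝ (Fin n)) : ℝ :=
  LinearMap.det ((fderiv ℝ u x).toLinearMap)

/-- The multiplicity `mult_U(u)`: essential supremum of the counting function
`y ↦ #(U ∩ u⁻¹{y})`. -/
def multOn {n : ℕ} (U : Set (EuclideanSpace ℝ (Fin n)))
    (u : EuclideanSpace ℝ (Fin n) → EuclideanSpace ℝ (Fin n)) : ℕ∞ :=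
  essSup (fun y => (U ∩ u ⁻¹' {y}).encard) volume

section perm
open Equiv

/-- Two permutations with a single common moved point have a commutator that is a 3-cycle. -/
lemma comm_three {α : Type*} [DecidableEq α] (r c : Perm α) (a : α)
    (h : ∀ x, r x ≠ x → c x ≠ x → x = a) (hr : r a ≠ a) (hc : c a ≠ a) :
    r * c * r⁻¹ * c⁻¹ = swap a (c a) * swap a (r a) := by
  have hcr : r (c a) = c a := by
    by_contra hh
    exact hc (h _ hh (fun e => hc (c.injective e)))
  have hrc : c (r a) = r a := by
    by_contra hh
    exact hr (h _ (fun e => hr (r.injective e)) hh)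
  have hne : r a ≠ c a := by
    intro e
    rw [e] at hrc
    exact hc (c.injective hrc)
  have hcr' : r (c⁻¹ a) = c⁻¹ a := by
    by_contra hh
    have h1 : c (c⁻¹ a) ≠ c⁻¹ a := by
      intro e
      apply hc
      have : a = c⁻¹ a := by simpa using e
      nth_rw 1 [this]; simp
    have := h _ hh h1
    apply hc
    nth_rw 1 [← this]; simp
  have hrc' : c (r⁻¹ a) = r⁻¹ a := by
    by_contra hh
    have h1 : r (r⁻¹ a) ≠ r⁻¹ a := by
      intro e
      apply hr
      have : a = r⁻¹ a := by simpa using e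
      nth_rw 1 [this]; simp
    have := h _ h1 hh
    apply hr
    nth_rw 1 [← this]; simp
  have key : ∀ y, (r * c * r⁻¹ * c⁻¹) y = r (c (r⁻¹ (c⁻¹ y))) := fun y => rfl
  ext x
  rw [key]
  by_cases h1 : x = a
  · subst h1
    have : r⁻¹ (c⁻¹ x) = c⁻¹ x := by rw [Perm.inv_eq_iff_eq, hcr']
    rw [this]
    simp [Perm.mul_apply, swap_apply_of_ne_of_ne hr hne]
  by_cases h2 : x = r a
  · subst h2
    have : c⁻¹ (r a) = r a := by rw [Perm.inv_eq_iff_eq, hrc]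
    rw [this]
    simp [Perm.mul_apply, hcr]
  by_cases h3 : x = c a
  · subst h3
    have e0 : c⁻¹ (c a) = a := by simp
    rw [e0, hrc']
    simp [Perm.mul_apply, swap_apply_of_ne_of_ne hc hne.symm]
  · rw [Perm.mul_apply, swap_apply_of_ne_of_ne h1 h2, swap_apply_of_ne_of_ne h1 h3]
    by_cases hcx : c x = x
    · have e1 : c⁻¹ x = x := by rw [Perm.inv_eq_iff_eq, hcx]
      rw [e1]
      by_cases hcy : c (r⁻¹ x) = r⁻¹ x
      · rw [hcy]; simp
      · exfalso
        have hry : r (r⁻¹ x) ≠ r⁻¹ x := by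
          intro e
          apply hcy
          have : x = r⁻¹ x := by simpa using e
          rw [← this, hcx]
        have := h _ hry hcy
        apply h2
        rw [← this]; simp
    · have hrx : r x = x := by
        by_contra hh
        exact h1 (h _ hh hcx)
      have hy : c (c⁻¹ x) ≠ c⁻¹ x := by
        intro e
        apply hcx
        have : x = c⁻¹ x := by simpa using e
        nth_rw 1 [this]; simp
      have hry : r (c⁻¹ x) = c⁻¹ x := by
        by_contra hh
        have := h _ hh hy
        apply h3
        rw [← this]; simp
      have e1 : r⁻¹ (c⁻¹ x) = c⁻¹ x := by rw [Perm.inv_eq_iff_eq, hry]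
      rw [e1]; simp [hrx]

/-- Shift a single row of the lattice. -/
def rowShiftFun {n : ℕ} (i : Fin n) (a : Fin n → ℤ) (s : ℤ) (k : Fin n → ℤ) : Fin n → ℤ :=
  open Classical in if ∀ j, j ≠ i → k j = a j then Function.update k i (k i + s) else k

lemma rowShiftFun_comp {n : ℕ} (i : Fin n) (a : Fin n → ℤ) (s : ℤ) (k : Fin n → ℤ) :
    rowShiftFun i a (-s) (rowShiftFun i a s k) = k := by
  unfold rowShiftFun
  by_cases h : ∀ j, j ≠ i → k j = a j
  · have h' : ∀ j, j ≠ i → Function.update k i (k i + s) j = a j := by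
      intro j hj
      rw [Function.update_of_ne hj, h j hj]
    rw [if_pos h, if_pos h']
    simp
  · rw [if_neg h, if_neg h]

def rowShift {n : ℕ} (i : Fin n) (a : Fin n → ℤ) (s : ℤ) : Perm (Fin n → ℤ) where
  toFun := rowShiftFun i a s
  invFun := rowShiftFun i a (-s)
  left_inv := rowShiftFun_comp i a s
  right_inv := fun k => by
    have := rowShiftFun_comp i a (-s) k
    rwa [neg_neg] at this

lemma rowShift_inv {n : ℕ} (i : Fin n) (a : Fin n → ℤ) (s : ℤ) :
    (rowShift i a s)⁻¹ = rowShift i a (-s) := by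
  ext k : 1
  rfl

lemma rowShift_self {n : ℕ} (i : Fin n) (a : Fin n → ℤ) (s : ℤ) :
    rowShift i a s a = Function.update a i (a i + s) := by
  simp [rowShift, rowShiftFun]

lemma rowShift_moved {n : ℕ} (i : Fin n) (a : Fin n → ℤ) (s : ℤ) (k : Fin n → ℤ)
    (h : rowShift i a s k ≠ k) : ∀ j, j ≠ i → k j = a j := by
  by_contra hh
  apply h
  simp only [rowShift, rowShiftFun, Equiv.coe_fn_mk]
  rw [if_neg hh]

lemma exists_update_notMem {n : ℕ} (i : Fin n) (a : Fin n → ℤ) (F : Finset (Fin n → ℤ)) :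
    ∃ s : ℤ, s ≠ 0 ∧ Function.update a i (a i + s) ∉ F := by
  have hinj : Function.Injective (fun s : ℤ => Function.update a i (a i + s)) := by
    intro s t hst
    have := congrFun hst i
    simpa using this
  have hinf : (Set.range (fun s : ℤ => Function.update a i (a i + s))).Infinite :=
    Set.infinite_range_of_injective hinj
  obtain ⟨y, ⟨s, rfl⟩, hy⟩ := hinf.exists_notMem_finset (insert a F)
  refine ⟨s, ?_, fun h => hy (Finset.mem_insert_of_mem h)⟩
  rintro rfl
  apply hy
  simp

lemma swap_update_mem {n : ℕ} (hn : 2 ≤ n) (H : Submonoid (Perm (Fin n → ℤ)))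
    (hloc : ∀ π : Perm (Fin n → ℤ),
      (∀ F : Finset (Fin n → ℤ), ∃ τ ∈ H, ∀ k ∈ F, τ k = π k) → π ∈ H)
    (hrow : ∀ i a s, rowShift i a s ∈ H) (a : Fin n → ℤ) (j : Fin n) (v : ℤ) :
    swap a (Function.update a j v) ∈ H := by
  by_cases hv : v = a j
  · subst hv; rw [Function.update_eq_self, swap_self]; exact H.one_mem
  apply hloc
  intro F
  have : Nontrivial (Fin n) := Fin.nontrivial_iff_two_le.mpr hn
  obtain ⟨i, hij⟩ := exists_ne j
  obtain ⟨s, hs, hsF⟩ := exists_update_notMem i a F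
  obtain ⟨m, hm, hmF⟩ := exists_update_notMem j a F
  have three : ∀ m : ℤ, m ≠ 0 → swap a (Function.update a j (a j + m)) *
      swap a (Function.update a i (a i + s)) ∈ H := by
    intro m hm
    have := comm_three (rowShift i a s) (rowShift j a m) a ?_ ?_ ?_
    · rw [rowShift_self, rowShift_self] at this
      rw [← this, rowShift_inv, rowShift_inv]
      exact H.mul_mem (H.mul_mem (H.mul_mem (hrow _ _ _) (hrow _ _ _)) (hrow _ _ _)) (hrow _ _ _)
    · intro x h1 h2
      ext l
      by_cases hl : l = i
      · subst hl; exact rowShift_moved _ _ _ _ h2 _ hij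
      · exact rowShift_moved _ _ _ _ h1 _ hl
    · rw [rowShift_self]; intro e; have := congrFun e i; simp at this; exact hs this
    · rw [rowShift_self]; intro e; have := congrFun e j; simp at this; exact hm this
  have h1 := three (v - a j) (sub_ne_zero.mpr hv)
  have h2 := three m hm
  set b := Function.update a i (a i + s) with hb
  set d := Function.update a j (a j + m) with hd
  have hab : a ≠ b := by
    intro e; have := congrFun e i; simp [hb] at this; exact hs this
  have hbd : b ≠ d := by
    intro e; have := congrFun e i; simp [hb, hd, Function.update_of_ne hij] at this; exact hs this
  have had : a ≠ d := by
    intro e; have := congrFun e j; simp [hd] at this; exact hm this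
  refine ⟨_, H.mul_mem h1 h2, ?_⟩
  intro k hk
  have hkb : k ≠ b := fun e => hsF (e ▸ hk)
  have hkd : k ≠ d := fun e => hmF (e ▸ hk)
  have e1 : swap a b * (swap a d * swap a b) = swap b d := by
    have := Equiv.mul_swap_eq_swap_mul (swap a b) a d
    rw [← mul_assoc, this]
    rw [swap_apply_left, swap_apply_of_ne_of_ne had.symm hbd.symm, mul_assoc, swap_mul_self, mul_one]
  rw [add_sub_cancel, mul_assoc, e1, Perm.mul_apply, swap_apply_of_ne_of_ne hkb hkd]

lemma swap_mem_H {n : ℕ} (hn : 2 ≤ n) (H : Submonoid (Perm (Fin n → ℤ)))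
    (hloc : ∀ π : Perm (Fin n → ℤ),
      (∀ F : Finset (Fin n → ℤ), ∃ τ ∈ H, ∀ k ∈ F, τ k = π k) → π ∈ H)
    (hrow : ∀ i a s, rowShift i a s ∈ H) (a b : Fin n → ℤ) :
    swap a b ∈ H := by
  have key : ∀ s : Finset (Fin n), swap a (fun j => if j ∈ s then b j else a j) ∈ H := by
    intro s
    induction s using Finset.induction_on with
    | empty => simp only [Finset.notMem_empty, if_false]; rw [swap_self]; exact H.one_mem
    | insert j s hj ih =>
      have h2 := swap_update_mem hn H hloc hrow (fun j => if j ∈ s then b j else a j) j (b j)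
      have : (fun l => if l ∈ insert j s then b l else a l) =
          Function.update (fun j => if j ∈ s then b j else a j) j (b j) := by
        ext l
        by_cases hl : l = j
        · subst hl; simp
        · simp [hl]
      rw [this]
      exact SubmonoidClass.swap_mem_trans _ ih h2
  simpa using key Finset.univ

lemma ofSubtype_mem_H {n : ℕ} (hn : 2 ≤ n) (H : Submonoid (Perm (Fin n → ℤ)))
    (hloc : ∀ π : Perm (Fin n → ℤ),
      (∀ F : Finset (Fin n → ℤ), ∃ τ ∈ H, ∀ k ∈ F, τ k = π k) → π ∈ H)
    (hrow : ∀ i a s, rowShift i a s ∈ H) (J : Finset (Fin n → ℤ)) (π : Perm J) :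
    Perm.ofSubtype π ∈ H := by
  induction π using Perm.swap_induction_on with
  | one => simp [H.one_mem]
  | swap_mul f x y hxy ih =>
    rw [map_mul]
    refine H.mul_mem ?_ ih
    rw [Perm.ofSubtype_swap_eq]
    exact swap_mem_H hn H hloc hrow _ _
end perm

section shear
open Filter Topology
open scoped ENNReal

/-- Splitting off the `i`-th coordinate. -/
def splitEquiv {m : ℕ} (i : Fin (m + 1)) :
    EuclideanSpace ℝ (Fin (m + 1)) ≃ᵐ (Fin m → ℝ) × ℝ :=
  ((MeasurableEquiv.toLp 2 (Fin (m + 1) → ℝ)).symm.trans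
    (MeasurableEquiv.piFinSuccAbove (fun _ => ℝ) i)).trans MeasurableEquiv.prodComm

lemma splitEquiv_apply {m : ℕ} (i : Fin (m + 1)) (x : EuclideanSpace ℝ (Fin (m + 1))) :
    splitEquiv i x = (fun j => x (i.succAbove j), x i) := by
  rfl

lemma splitEquiv_mp {m : ℕ} (i : Fin (m + 1)) :
    MeasurePreserving (splitEquiv i) volume volume := by
  have h1 := EuclideanSpace.volume_preserving_symm_measurableEquiv_toLp (Fin (m + 1))
  have h2 := volume_preserving_piFinSuccAbove (fun _ : Fin (m + 1) => ℝ) i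
  have h3 : MeasurePreserving (Prod.swap : ℝ × (Fin m → ℝ) → _) volume volume :=
    Measure.measurePreserving_swap
  exact h3.comp (h2.comp h1)

lemma splitEquiv_add {m : ℕ} (i : Fin (m + 1)) (x : EuclideanSpace ℝ (Fin (m + 1))) (t : ℝ) :
    splitEquiv i (x + t • EuclideanSpace.single i 1) =
      ((splitEquiv i x).1, (splitEquiv i x).2 + t) := by
  simp only [splitEquiv_apply]
  ext j <;> simp [Fin.succAbove_ne]

lemma splitEquiv_symm_add {m : ℕ} (i : Fin (m + 1)) (a : Fin m → ℝ) (c t : ℝ) :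
    (splitEquiv i).symm (a, c + t) = (splitEquiv i).symm (a, c) +
      t • EuclideanSpace.single i 1 := by
  rw [MeasurableEquiv.symm_apply_eq, splitEquiv_add]
  simp

lemma shear_mp {m : ℕ} (i : Fin (m + 1)) (φ : EuclideanSpace ℝ (Fin (m + 1)) → ℝ)
    (hφ : Measurable φ) (hinv : ∀ x (t : ℝ), φ (x + t • EuclideanSpace.single i 1) = φ x) :
    MeasurePreserving (fun x => x + φ x • EuclideanSpace.single i (1 : ℝ)) volume volume := by
  have h1 : MeasurePreserving
      (fun q : (Fin m → ℝ) × ℝ => (q.1, q.2 + φ ((splitEquiv i).symm (q.1, 0)))) volume volume := by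
    refine (MeasurePreserving.id volume).skew_product (g := fun a c => c + φ ((splitEquiv i).symm (a, 0)))
      ?_ ?_
    · exact measurable_snd.add (hφ.comp ((splitEquiv i).symm.measurable.comp
        (measurable_fst.prodMk measurable_const)))
    · exact Eventually.of_forall fun a => (measurePreserving_add_right volume _).map_eq
  have h2 := ((splitEquiv_mp i).symm.comp h1).comp (splitEquiv_mp i)
  convert h2 using 1
  ext1 x
  simp only [Function.comp]
  rw [splitEquiv_symm_add]
  have e2 : (splitEquiv i).symm ((splitEquiv i x).1, (splitEquiv i x).2) = x := by simp
  have e1 : φ ((splitEquiv i).symm ((splitEquiv i x).1, 0)) = φ x := by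
    rw [← hinv _ (splitEquiv i x).2, ← splitEquiv_symm_add, zero_add, e2]
  rw [e1, e2]

/-- Sets that every point eventually leaves have measure tending to zero. -/
lemma tendsto_measure_of_eventually_notMem {α : Type*} [MeasurableSpace α] (μ : Measure α)
    (X : Set α) (hX : μ X ≠ ∞) (B : ℕ → Set α) (hB : ∀ m, MeasurableSet (B m))
    (hBX : ∀ m, B m ⊆ X) (h : ∀ x, ∀ᶠ m in atTop, x ∉ B m) :
    Tendsto (fun m => μ (B m)) atTop (𝓝 0) := by
  have h1 : Tendsto (fun m => μ (⋃ k ≥ m, B k)) atTop (𝓝 (μ (⋂ m, ⋃ k ≥ m, B k))) := by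
    apply tendsto_measure_iInter_atTop
    · intro m
      exact (MeasurableSet.iUnion fun k => MeasurableSet.iUnion fun _ => hB k).nullMeasurableSet
    · intro a b hab
      exact biUnion_subset_biUnion_left (fun k (hk : b ≤ k) => (hab.trans hk : a ≤ k))
    · refine ⟨0, ne_top_of_le_ne_top hX (measure_mono ?_)⟩
      exact iUnion₂_subset fun k _ => hBX k
  have h2 : (⋂ m, ⋃ k ≥ m, B k) = ∅ := by
    ext x
    simp only [mem_iInter, mem_iUnion, mem_empty_iff_false, iff_false, not_forall]
    obtain ⟨m, hm⟩ := eventually_atTop.mp (h x)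
    exact ⟨m, fun ⟨k, hk, hx⟩ => hm k hk hx⟩
  rw [h2, measure_empty] at h1
  refine tendsto_of_tendsto_of_tendsto_of_le_of_le tendsto_const_nhds h1 (fun _ => zero_le) ?_
  intro m
  exact measure_mono (subset_iUnion₂_of_subset m le_rfl subset_rfl)

/-- index of the lattice cell containing `x` -/
def idx {n : ℕ} (h : ℝ) (x : EuclideanSpace ℝ (Fin n)) : Fin n → ℤ := fun i => ⌊x i / h⌋

lemma measurable_idx {n : ℕ} (h : ℝ) : Measurable (idx (n := n) h) := by
  apply measurable_pi_lambda
  intro i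
  apply Int.measurable_floor.comp
  fun_prop

structure GoodS {n : ℕ} (M : ℝ) (S : EuclideanSpace ℝ (Fin n) → EuclideanSpace ℝ (Fin n)) : Prop where
  lip : ∃ K, LipschitzWith K S
  inj : Function.Injective S
  mp : MeasurePreserving S volume volume
  disp : ∀ x, dist (S x) x ≤ M

def Approx {n : ℕ} (h : ℝ) (τ : Equiv.Perm (Fin n → ℤ)) : Prop :=
  ∀ F : Finset (Fin n → ℤ), ∃ M : ℝ, ∀ ε : ℝ≥0∞, 0 < ε → ∃ S, GoodS M S ∧
    volume {x : EuclideanSpace ℝ (Fin n) | idx h x ∈ F ∧ idx h (S x) ≠ τ (idx h x)} ≤ ε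

lemma mp_preimage_le {α : Type*} [MeasurableSpace α] {μ : Measure α} {S : α → α}
    (hS : MeasurePreserving S μ μ) (B : Set α) : μ (S ⁻¹' B) ≤ μ B := by
  calc μ (S ⁻¹' B) ≤ μ (S ⁻¹' (toMeasurable μ B)) :=
        measure_mono (preimage_mono (subset_toMeasurable _ _))
    _ = μ (toMeasurable μ B) := hS.measure_preimage (measurableSet_toMeasurable _ _).nullMeasurableSet
    _ = μ B := measure_toMeasurable _

def approxSub {n : ℕ} (h : ℝ) : Submonoid (Equiv.Perm (Fin n → ℤ)) where
  carrier := {τ | Approx h τ}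
  one_mem' := by
    intro F
    refine ⟨0, fun ε hε => ⟨id, ⟨⟨1, LipschitzWith.id⟩, Function.injective_id,
      MeasurePreserving.id _, by simp⟩, ?_⟩⟩
    simp
  mul_mem' := by
    intro τ σ hτ hσ F
    obtain ⟨M1, h1⟩ := hσ F
    obtain ⟨M2, h2⟩ := hτ (F.image σ)
    refine ⟨M1 + M2, fun ε hε => ?_⟩
    obtain ⟨S1, g1, b1⟩ := h1 (ε / 2) (ENNReal.half_pos hε.ne')
    obtain ⟨S2, g2, b2⟩ := h2 (ε / 2) (ENNReal.half_pos hε.ne')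
    refine ⟨S2 ∘ S1, ⟨?_, g2.inj.comp g1.inj, g2.mp.comp g1.mp, ?_⟩, ?_⟩
    · obtain ⟨K1, k1⟩ := g1.lip
      obtain ⟨K2, k2⟩ := g2.lip
      exact ⟨_, k2.comp k1⟩
    · intro x
      have a1 := g1.disp x
      have a2 := g2.disp (S1 x)
      have := dist_triangle (S2 (S1 x)) (S1 x) x
      simp only [Function.comp]
      linarith
    · calc _ ≤ volume ({x : EuclideanSpace ℝ (Fin n) | idx h x ∈ F ∧ idx h (S1 x) ≠ σ (idx h x)} ∪
            S1 ⁻¹' {x | idx h x ∈ F.image σ ∧ idx h (S2 x) ≠ τ (idx h x)}) := by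
            apply measure_mono
            rintro x ⟨hx1, hx2⟩
            by_cases hx : idx h (S1 x) = σ (idx h x)
            · right
              refine ⟨?_, ?_⟩
              · rw [hx]; exact Finset.mem_image_of_mem _ hx1
              · rw [hx]; exact hx2
            · left; exact ⟨hx1, hx⟩
        _ ≤ ε / 2 + ε / 2 := (measure_union_le _ _).trans
            (add_le_add b1 ((mp_preimage_le g1.mp _).trans b2))
        _ = ε := ENNReal.add_halves ε

lemma approxSub_loc {n : ℕ} (h : ℝ) (π : Equiv.Perm (Fin n → ℤ))
    (hp : ∀ F : Finset (Fin n → ℤ), ∃ τ ∈ approxSub h, ∀ k ∈ F, τ k = π k) :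
    π ∈ approxSub h := by
  intro F
  obtain ⟨τ, hτ, hF⟩ := hp F
  obtain ⟨M, hM⟩ := hτ F
  refine ⟨M, fun ε hε => ?_⟩
  obtain ⟨S, hS, hb⟩ := hM ε hε
  refine ⟨S, hS, le_trans (measure_mono ?_) hb⟩
  rintro x ⟨h1, h2⟩
  exact ⟨h1, by rwa [hF _ h1]⟩

lemma psi_lip (m : ℕ) (a : ℝ) : ∃ K, LipschitzWith K
    (fun t : ℝ => max 0 (min 1 (min (1 + m * (t - a)) (m * (a + 1 - t))))) := by
  have l1 : LipschitzWith m (fun t : ℝ => 1 + (m : ℝ) * (t - a)) := by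
    apply LipschitzWith.of_dist_le_mul
    intro x y
    simp only [Real.dist_eq]
    rw [show 1 + (m : ℝ) * (x - a) - (1 + m * (y - a)) = m * (x - y) by ring, abs_mul]
    simp
  have l2 : LipschitzWith m (fun t : ℝ => (m : ℝ) * (a + 1 - t)) := by
    apply LipschitzWith.of_dist_le_mul
    intro x y
    simp only [Real.dist_eq]
    rw [show (m : ℝ) * (a + 1 - x) - (m * (a + 1 - y)) = m * (-(x - y)) by ring, abs_mul, abs_neg]
    simp
  exact ⟨_, ((l1.min l2).const_min 1).const_max 0⟩

lemma psi_ev (a : ℤ) (t : ℝ) : ∀ᶠ m : ℕ in atTop,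
    max 0 (min 1 (min (1 + (m : ℝ) * (t - a)) (m * (a + 1 - t)))) = if ⌊t⌋ = a then 1 else 0 := by
  by_cases h : ⌊t⌋ = a
  · rw [if_pos h]
    rw [Int.floor_eq_iff] at h
    obtain ⟨M, hM⟩ := exists_nat_gt (1 / (a + 1 - t))
    filter_upwards [eventually_ge_atTop M] with m hm
    have h3 : 0 < a + 1 - t := by linarith
    have : (1 : ℝ) ≤ m * (a + 1 - t) := by
      have hm' : (M : ℝ) ≤ m := by exact_mod_cast hm
      rw [div_lt_iff₀ h3] at hM
      nlinarith
    have : (1 : ℝ) ≤ 1 + m * (t - a) := by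
      have : (0 : ℝ) ≤ m * (t - a) := mul_nonneg (by positivity) (by linarith)
      linarith
    rw [min_eq_left (le_min this (by assumption))]
    simp
  · rw [if_neg h]
    rw [Int.floor_eq_iff, not_and_or] at h
    rcases h with h | h
    · push Not at h
      obtain ⟨M, hM⟩ := exists_nat_gt (1 / (a - t))
      filter_upwards [eventually_ge_atTop M] with m hm
      have h3 : 0 < a - t := by linarith
      have : 1 + m * (t - a) ≤ (0 : ℝ) := by
        have hm' : (M : ℝ) ≤ m := by exact_mod_cast hm
        rw [div_lt_iff₀ h3] at hM
        nlinarith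
      exact max_eq_left ((min_le_right _ _).trans ((min_le_left _ _).trans this))
    · push Not at h
      refine Eventually.of_forall fun m => ?_
      have : m * (a + 1 - t) ≤ (0 : ℝ) :=
        mul_nonpos_of_nonneg_of_nonpos (by positivity) (by linarith)
      exact max_eq_left ((min_le_right _ _).trans ((min_le_right _ _).trans this))

lemma exists_phi {n : ℕ} (h : ℝ) (hh : 0 < h) (i : Fin n) (a : Fin n → ℤ) (s : Finset (Fin n))
    (hs : i ∉ s) : ∃ φ : ℕ → EuclideanSpace ℝ (Fin n) → ℝ,
      (∀ m, ∃ K, LipschitzWith K (φ m)) ∧ (∀ m x, 0 ≤ φ m x ∧ φ m x ≤ 1) ∧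
      (∀ m x (t : ℝ), φ m (x + t • EuclideanSpace.single i 1) = φ m x) ∧
      ∀ x, ∀ᶠ m in atTop, φ m x = open Classical in if ∀ j ∈ s, idx h x j = a j then 1 else 0 := by
  classical
  induction s using Finset.induction_on with
  | empty =>
    refine ⟨fun _ _ => 1, fun m => ⟨0, LipschitzWith.const 1⟩, by simp, by simp, by simp⟩
  | insert j s hj ih =>
    obtain ⟨φ, h1, h2, h3, h4⟩ := ih (fun h => hs (Finset.mem_insert_of_mem h))
    have hji : j ≠ i := fun e => hs (e ▸ Finset.mem_insert_self _ _)
    refine ⟨fun m x => min (φ m x)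
      (max 0 (min 1 (min (1 + m * (x j / h - a j)) (m * (a j + 1 - x j / h))))), ?_, ?_, ?_, ?_⟩
    · intro m
      obtain ⟨K1, k1⟩ := h1 m
      obtain ⟨K2, k2⟩ := psi_lip m (a j)
      have k3 : LipschitzWith (Real.toNNReal h⁻¹) (fun x : EuclideanSpace ℝ (Fin n) => x j / h) := by
        apply LipschitzWith.of_dist_le_mul
        intro x y
        rw [Real.dist_eq, ← sub_div, abs_div, abs_of_pos hh, Real.coe_toNNReal _ (by positivity),
          div_eq_inv_mul]
        gcongr
        rw [dist_eq_norm]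
        exact PiLp.norm_apply_le (x - y) j
      exact ⟨_, k1.min (k2.comp k3)⟩
    · intro m x
      refine ⟨le_min (h2 m x).1 (le_max_left _ _), (min_le_left _ _).trans (h2 m x).2⟩
    · intro m x t
      simp only [h3]
      simp [hji]
    · intro x
      filter_upwards [h4 x, psi_ev (a j) (x j / h)] with m e1 e2
      rw [e1, e2]
      have : (∀ l ∈ insert j s, idx h x l = a l) ↔ ⌊x j / h⌋ = a j ∧ ∀ l ∈ s, idx h x l = a l := by
        simp [idx]
      by_cases c1 : ⌊x j / h⌋ = a j <;> by_cases c2 : ∀ l ∈ s, idx h x l = a l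
      · rw [if_pos c1, if_pos c2, if_pos (this.mpr ⟨c1, c2⟩), min_self]
      · rw [if_pos c1, if_neg c2, if_neg (fun c => c2 (this.mp c).2)]; simp
      · rw [if_neg c1, if_pos c2, if_neg (fun c => c1 (this.mp c).1)]; simp
      · rw [if_neg c1, if_neg c2, if_neg (fun c => c1 (this.mp c).1), min_self]

lemma coord_le_norm {n : ℕ} (x : EuclideanSpace ℝ (Fin n)) (j : Fin n) : |x j| ≤ ‖x‖ :=
  PiLp.norm_apply_le x j

lemma norm_le_of_coord {n : ℕ} (x : EuclideanSpace ℝ (Fin n)) (c : ℝ) (hc : 0 ≤ c)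
    (h : ∀ j, |x j| ≤ c) : ‖x‖ ≤ n * c := by
  rw [EuclideanSpace.norm_eq]
  apply Real.sqrt_le_iff.mpr
  refine ⟨by positivity, ?_⟩
  calc ∑ i, ‖x i‖ ^ 2 ≤ ∑ i : Fin n, c ^ 2 := by
        apply Finset.sum_le_sum
        intro i _
        exact pow_le_pow_left₀ (norm_nonneg _) (h i) 2
    _ = n * c ^ 2 := by simp
    _ ≤ (n * c) ^ 2 := by
        rw [mul_pow]
        have : (n : ℝ) ≤ (n : ℝ) ^ 2 := by
          exact_mod_cast Nat.le_self_pow two_ne_zero n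
        gcongr

lemma cells_bounded {n : ℕ} (h : ℝ) (hh : 0 < h) (F : Finset (Fin n → ℤ)) :
    IsBounded {x : EuclideanSpace ℝ (Fin n) | idx h x ∈ F} := by
  have : {x : EuclideanSpace ℝ (Fin n) | idx h x ∈ F} =
      ⋃ k ∈ F, {x : EuclideanSpace ℝ (Fin n) | idx h x = k} := by ext; simp
  rw [this, isBounded_biUnion_finset]
  intro k _
  rw [isBounded_iff_forall_norm_le]
  refine ⟨n * ((∑ j, |(k j : ℝ)| + 1) * h), ?_⟩
  rintro x rfl
  apply norm_le_of_coord _ _ (by positivity)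
  intro j
  have h1 := Int.floor_le (x j / h)
  have h2 := Int.lt_floor_add_one (x j / h)
  have h3 : |((idx h x j : ℤ) : ℝ)| ≤ ∑ j, |((idx h x j : ℤ) : ℝ)| :=
    Finset.single_le_sum (f := fun j => |((idx h x j : ℤ) : ℝ)|) (fun _ _ => abs_nonneg _) (Finset.mem_univ j)
  have h4 : |x j / h| ≤ |((idx h x j : ℤ) : ℝ)| + 1 := by
    have e : ((idx h x j : ℤ) : ℝ) = ⌊x j / h⌋ := rfl
    rw [e]
    have := abs_add_le (⌊x j / h⌋ : ℝ) (x j / h - ⌊x j / h⌋)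
    have h5 : |x j / h - ⌊x j / h⌋| ≤ 1 := abs_le.mpr ⟨by linarith, by linarith⟩
    rw [add_sub_cancel] at this
    linarith
  rw [abs_div, abs_of_pos hh, div_le_iff₀ hh] at h4
  refine h4.trans ?_
  gcongr

lemma rowShift_approx {n : ℕ} (h : ℝ) (hh : 0 < h) (i : Fin n) (a : Fin n → ℤ) (s : ℤ) :
    rowShift i a s ∈ approxSub h := by
  classical
  intro F
  obtain ⟨φ, h1, h2, h3, h4⟩ := exists_phi h hh i a (Finset.univ.erase i) (by simp)
  refine ⟨|h * s|, fun ε hε => ?_⟩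
  set S : ℕ → EuclideanSpace ℝ (Fin n) → EuclideanSpace ℝ (Fin n) :=
    fun m x => x + ((h * s) * φ m x) • EuclideanSpace.single i (1 : ℝ) with hS
  have hcont : ∀ m, Continuous (φ m) := fun m => (h1 m).choose_spec.continuous
  have hScont : ∀ m, Continuous (S m) := by
    intro m
    have := hcont m
    fun_prop
  have good : ∀ m, GoodS |h * s| (S m) := by
    intro m
    refine ⟨?_, ?_, ?_, ?_⟩
    · obtain ⟨K, hK⟩ := h1 m
      refine ⟨1 + Real.toNNReal |h * s| * K, ?_⟩
      apply LipschitzWith.add LipschitzWith.id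
      apply LipschitzWith.of_dist_le_mul
      intro x y
      rw [dist_eq_norm, ← sub_smul, norm_smul, ← mul_sub, norm_mul, Real.norm_eq_abs]
      have := hK.dist_le_mul x y
      rw [Real.dist_eq] at this
      simp only [PiLp.norm_single, norm_one, mul_one, NNReal.coe_mul, Real.coe_toNNReal _ (abs_nonneg (h * s)), mul_assoc, Real.norm_eq_abs]
      gcongr
    · intro x y hxy
      have e : φ m x = φ m y := by
        have a1 := h3 m x ((h * s) * φ m x)
        have a2 := h3 m y ((h * s) * φ m y)
        have hxy' : x + ((h * s) * φ m x) • EuclideanSpace.single i (1 : ℝ) = y + ((h * s) * φ m y) • EuclideanSpace.single i (1 : ℝ) := hxy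
        rw [← a1, ← a2, hxy']
      simp only [hS, e] at hxy
      exact add_right_cancel hxy
    · obtain ⟨q, rfl⟩ : ∃ q, n = q + 1 := ⟨n - 1, by have := i.2; omega⟩
      apply shear_mp i (fun x => (h * s) * φ m x)
      · exact ((hcont m).const_mul _ ).measurable
      · intro x t; simp only [h3]
    · intro x
      simp only [hS]
      rw [dist_self_add_left, norm_smul, norm_mul]
      simp only [PiLp.norm_single, norm_one, mul_one, Real.norm_eq_abs]
      calc |h * s| * |φ m x| ≤ |h * s| * 1 := by
            gcongr
            rw [abs_of_nonneg (h2 m x).1]; exact (h2 m x).2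
        _ = _ := mul_one _
  have hdisc : DiscreteMeasurableSpace (Fin n → ℤ) := inferInstance
  have lim := tendsto_measure_of_eventually_notMem volume
    {x : EuclideanSpace ℝ (Fin n) | idx h x ∈ F} (cells_bounded h hh F).measure_lt_top.ne
    (fun m => {x | idx h x ∈ F ∧ idx h (S m x) ≠ rowShift i a s (idx h x)}) ?_ ?_ ?_
  · have := (lim.eventually (ge_mem_nhds hε)).exists
    obtain ⟨m, hm⟩ := this
    exact ⟨S m, good m, hm⟩
  · intro m
    have : Measurable (fun x => (idx h x, idx h (S m x))) :=
      (measurable_idx h).prodMk ((measurable_idx h).comp (hScont m).measurable)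
    exact this (MeasurableSet.of_discrete (s := {q : (Fin n → ℤ) × (Fin n → ℤ) | q.1 ∈ F ∧ q.2 ≠ rowShift i a s q.1}))
  · exact fun m x hx => hx.1
  · intro x
    filter_upwards [h4 x] with m hm
    rintro ⟨-, hx⟩
    apply hx
    by_cases c : ∀ j, j ≠ i → idx h x j = a j
    · rw [if_pos (by simpa using c)] at hm
      simp only [rowShift, rowShiftFun, Equiv.coe_fn_mk, if_pos c]
      ext j
      by_cases hj : j = i
      · subst hj
        simp [idx, hS, hm]
        rw [add_div, mul_div_cancel_left₀ _ hh.ne', Int.floor_add_intCast]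
      · simp [idx, hS, hj]
    · rw [if_neg (by simpa using c)] at hm
      simp only [rowShift, rowShiftFun, Equiv.coe_fn_mk, if_neg c, hS, hm]
      simp

/-- any permutation of finitely many cells is approximately realised by good maps -/
lemma approx_perm {n : ℕ} (hn : 2 ≤ n) (h : ℝ) (hh : 0 < h) (J : Finset (Fin n → ℤ))
    (π : Equiv.Perm J) : ∃ M : ℝ, ∀ ε : ℝ≥0∞, 0 < ε → ∃ S, GoodS M S ∧
    volume {x : EuclideanSpace ℝ (Fin n) |
      ∃ hx : idx h x ∈ J, idx h (S x) ≠ π ⟨idx h x, hx⟩} ≤ ε := by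
  have := ofSubtype_mem_H hn (approxSub h) (approxSub_loc h) (rowShift_approx h hh) J π
  obtain ⟨M, hM⟩ := this J
  refine ⟨M, fun ε hε => ?_⟩
  obtain ⟨S, hS, hb⟩ := hM ε hε
  refine ⟨S, hS, le_trans (measure_mono ?_) hb⟩
  rintro x ⟨hx, h2⟩
  refine ⟨hx, ?_⟩
  rwa [Equiv.Perm.ofSubtype_apply_of_mem π hx]
end shear

section assign
open Filter Topology
open scoped ENNReal

lemma birkhoff_assign {J : Type*} [Fintype J] [DecidableEq J] (A : J → J → ℝ) (c : J → J → ℝ)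
    (hA : ∀ i j, 0 ≤ A i j) (hr : ∀ i, ∑ j, A i j ≤ 1) (hc : ∀ j, ∑ i, A i j ≤ 1)
    (hI : ∀ i, ∑ j, A i j = 1 ∨ ∀ j, c i j = 0) :
    ∃ π : Equiv.Perm J, ∑ i, c i (π i) ≤ ∑ i, ∑ j, A i j * c i j := by
  set D := ∑ i, (1 - ∑ j, A i j) with hD
  have hD' : D = ∑ j, (1 - ∑ i, A i j) := by
    rw [hD, Finset.sum_sub_distrib, Finset.sum_sub_distrib, Finset.sum_comm]
  have hDr : ∀ i, D = 0 → 1 - ∑ j, A i j = 0 := by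
    intro i h
    exact (Finset.sum_eq_zero_iff_of_nonneg (fun i _ => sub_nonneg.mpr (hr i))).mp h i
      (Finset.mem_univ _)
  have hDc : ∀ j, D = 0 → 1 - ∑ i, A i j = 0 := by
    intro j h
    rw [hD'] at h
    exact (Finset.sum_eq_zero_iff_of_nonneg (fun i _ => sub_nonneg.mpr (hc i))).mp h j
      (Finset.mem_univ _)
  have hD0 : 0 ≤ D := Finset.sum_nonneg fun i _ => sub_nonneg.mpr (hr i)
  set Q : Matrix J J ℝ := fun i j => A i j + (1 - ∑ j, A i j) * (1 - ∑ i, A i j) / D with hQ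
  have hmem : Q ∈ doublyStochastic ℝ J := by
    rw [mem_doublyStochastic_iff_sum]
    refine ⟨?_, ?_, ?_⟩
    · intro i j
      exact add_nonneg (hA i j) (div_nonneg (mul_nonneg (sub_nonneg.mpr (hr i))
        (sub_nonneg.mpr (hc j))) hD0)
    · intro i
      simp only [hQ]
      rw [Finset.sum_add_distrib, ← Finset.sum_div, ← Finset.mul_sum, ← hD']
      by_cases h : D = 0
      · have := hDr i h
        rw [this]; simp; linarith
      · rw [mul_div_assoc, div_self h]; ring
    · intro j
      simp only [hQ]
      rw [Finset.sum_add_distrib, ← Finset.sum_div, ← Finset.sum_mul, ← hD]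
      by_cases h : D = 0
      · have := hDc j h
        rw [this]; simp; linarith
      · rw [mul_comm, mul_div_assoc, div_self h]; ring
  obtain ⟨w, w0, w1, wQ⟩ := exists_eq_sum_perm_of_mem_doublyStochastic hmem
  have hcost : ∑ i, ∑ j, A i j * c i j = ∑ i, ∑ j, Q i j * c i j := by
    refine Finset.sum_congr rfl fun i _ => Finset.sum_congr rfl fun j _ => ?_
    rcases hI i with h | h
    · simp only [hQ]; rw [h]; simp
    · rw [h j]; simp
  have hperm : ∑ i, ∑ j, Q i j * c i j = ∑ σ : Equiv.Perm J, w σ * ∑ i, c i (σ i) := by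
    have : ∀ i j, Q i j = ∑ σ : Equiv.Perm J, w σ * (if σ i = j then 1 else 0) := by
      intro i j
      rw [← wQ, Matrix.sum_apply]
      refine Finset.sum_congr rfl fun σ _ => ?_
      simp [Equiv.Perm.permMatrix, PEquiv.toMatrix_apply, eq_comm]
    simp only [this, Finset.sum_mul]
    calc _ = ∑ i, ∑ σ : Equiv.Perm J, ∑ j, w σ * (if σ i = j then 1 else 0) * c i j :=
          Finset.sum_congr rfl fun i _ => Finset.sum_comm
      _ = ∑ σ : Equiv.Perm J, ∑ i, ∑ j, w σ * (if σ i = j then 1 else 0) * c i j :=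
          Finset.sum_comm
      _ = _ := by
          refine Finset.sum_congr rfl fun σ _ => ?_
          rw [Finset.mul_sum]
          refine Finset.sum_congr rfl fun i _ => ?_
          simp
  by_contra hcon
  push Not at hcon
  rw [hcost, hperm] at hcon
  have h1 : ∑ σ : Equiv.Perm J, w σ * (∑ τ : Equiv.Perm J, w τ * ∑ i, c i (τ i)) <
      ∑ σ : Equiv.Perm J, w σ * ∑ i, c i (σ i) := by
    apply Finset.sum_lt_sum
    · intro σ _
      exact mul_le_mul_of_nonneg_left (hcon σ).le (w0 σ)
    · have : ∃ σ, 0 < w σ := by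
        by_contra hh
        push Not at hh
        have : ∑ σ, w σ ≤ 0 := Finset.sum_nonpos fun σ _ => hh σ
        linarith
      obtain ⟨σ, hσ⟩ := this
      exact ⟨σ, Finset.mem_univ _, mul_lt_mul_of_pos_left (hcon σ) hσ⟩
  rw [← Finset.sum_mul, w1, one_mul] at h1
  exact lt_irrefl _ h1

variable {n : ℕ}

def cell (h : ℝ) (k : Fin n → ℤ) : Set (EuclideanSpace ℝ (Fin n)) := {x | idx h x = k}

def corner (h : ℝ) (k : Fin n → ℤ) : EuclideanSpace ℝ (Fin n) := WithLp.toLp 2 fun i => h * k i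

lemma corner_mem (h : ℝ) (hh : 0 < h) (k : Fin n → ℤ) : corner h k ∈ cell h k := by
  ext i
  simp [idx, corner, mul_div_cancel_left₀ _ hh.ne']

lemma measurableSet_cell (h : ℝ) (k : Fin n → ℤ) : MeasurableSet (cell h k) :=
  measurable_idx h (measurableSet_singleton k)

lemma volume_cell (h : ℝ) (hh : 0 < h) (k : Fin n → ℤ) :
    volume (cell h k) = ENNReal.ofReal h ^ n := by
  have h1 := EuclideanSpace.volume_preserving_symm_measurableEquiv_toLp (Fin n)
  have : cell h k = (MeasurableEquiv.toLp 2 (Fin n → ℝ)).symm ⁻¹'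
      (Set.pi univ fun i => Ico (h * k i) (h * k i + h)) := by
    ext x
    simp only [cell, mem_ofPred_eq, idx, mem_preimage, Set.mem_pi, mem_univ, true_imp_iff, funext_iff,
      Int.floor_eq_iff, mem_Ico]
    refine forall_congr' fun i => and_congr ?_ ?_
    · rw [le_div_iff₀ hh, mul_comm]; rfl
    · rw [div_lt_iff₀ hh]
      have : ((k i : ℝ) + 1) * h = h * k i + h := by ring
      rw [this]; rfl
  rw [this, h1.measure_preimage (MeasurableSet.univ_pi fun i => measurableSet_Ico).nullMeasurableSet,
    Real.volume_pi_Ico]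
  simp

lemma dist_le_of_idx_eq (h : ℝ) (hh : 0 < h) (x y : EuclideanSpace ℝ (Fin n))
    (hxy : idx h x = idx h y) : ‖x - y‖ ≤ n * h := by
  apply norm_le_of_coord _ _ hh.le
  intro j
  have e := congrFun hxy j
  have h1 := Int.abs_sub_lt_one_of_floor_eq_floor e
  rw [← sub_div, abs_div, abs_of_pos hh, div_lt_one hh] at h1
  exact h1.le

set_option maxHeartbeats 1600000 in
lemma exists_assign {p : ℝ} (hp : 1 < p) (U : Set (EuclideanSpace ℝ (Fin n)))
    (hU : MeasurableSet U)
    (K : NNReal) (u S0 : EuclideanSpace ℝ (Fin n) → EuclideanSpace ℝ (Fin n))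
    (hu : LipschitzWith K u) (hS0 : Measurable S0) (h : ℝ) (hh : 0 < h)
    (J : Finset (Fin n → ℤ)) 
    (hSJ : ∀ x ∈ U, idx h (S0 x) ∈ J)
    (hmarg : ∀ k, volume (U ∩ S0 ⁻¹' (cell h k)) ≤ volume (cell h k)) :
    ∃ π : Equiv.Perm J, ∑ i : J, (open Classical in if cell h i.1 ⊆ U then
        volume (cell h i.1) * ‖u (corner h i.1) - corner h (π i).1‖ₑ ^ p else 0)
      ≤ ∫⁻ x in U, (‖u x - S0 x‖ₑ + ENNReal.ofReal ((K + 1) * (n * h))) ^ p := by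
  classical
  set v : ℝ≥0∞ := ENNReal.ofReal h ^ n with hv
  have hv0 : v ≠ 0 := by
    rw [hv]; apply pow_ne_zero; simpa using hh
  have hvt : v ≠ ∞ := by
    rw [hv]; exact ENNReal.pow_ne_top ENNReal.ofReal_ne_top
  have hvr : 0 < v.toReal := ENNReal.toReal_pos hv0 hvt
  have hcell : ∀ k : Fin n → ℤ, volume (cell h k) = v := volume_cell h hh
  set X : J → J → Set (EuclideanSpace ℝ (Fin n)) :=
    fun i j => U ∩ cell h i.1 ∩ S0 ⁻¹' (cell h j.1) with hX
  have hXm : ∀ i j, MeasurableSet (X i j) := fun i j =>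
    (hU.inter (measurableSet_cell h _)).inter (hS0 (measurableSet_cell h _))
  have hXv : ∀ i j, volume (X i j) ≤ v := fun i j => by
    rw [← hcell i.1]; exact measure_mono fun x hx => hx.1.2
  have hXt : ∀ i j, volume (X i j) ≠ ∞ := fun i j => ne_top_of_le_ne_top hvt (hXv i j)
  have hrow : ∀ i, ∑ j, volume (X i j) = volume (U ∩ cell h i.1) := by
    intro i
    rw [← measure_biUnion_finset (fun a _ b _ hab => ?_) (fun j _ => hXm i j)]
    · congr 1
      ext x
      simp only [hX, mem_iUnion, Finset.mem_univ, exists_true_left]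
      constructor
      · rintro ⟨j, hj⟩; exact hj.1
      · intro hx; exact ⟨⟨_, hSJ x hx.1⟩, hx, rfl⟩
    · rw [Function.onFun, Set.disjoint_left]
      rintro x ⟨-, h1⟩ ⟨-, h2⟩
      exact hab (Subtype.ext (h1.symm.trans h2))
  have hcol : ∀ j, ∑ i, volume (X i j) ≤ v := by
    intro j
    rw [← measure_biUnion_finset (fun a _ b _ hab => ?_) (fun i _ => hXm i j)]
    · rw [← hcell j.1]
      refine le_trans (measure_mono ?_) (hmarg j.1)
      intro x hx
      simp only [mem_iUnion] at hx
      obtain ⟨i, -, hx⟩ := hx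
      exact ⟨hx.1.1, hx.2⟩
    · rw [Function.onFun, Set.disjoint_left]
      rintro x ⟨⟨-, h1⟩, -⟩ ⟨⟨-, h2⟩, -⟩
      exact hab (Subtype.ext (h1.symm.trans h2))
  set c : J → J → ℝ := fun i j => if cell h i.1 ⊆ U then
    ‖u (corner h i.1) - corner h j.1‖ ^ p else 0 with hc
  have hc0 : ∀ i j, 0 ≤ c i j := by
    intro i j
    simp only [hc]
    split_ifs
    · positivity
    · exact le_rfl
  have B1 : ∀ i, ∑ j, (volume (X i j)).toReal / v.toReal ≤ 1 := by
    intro i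
    rw [← Finset.sum_div, ← ENNReal.toReal_sum (fun j _ => hXt i j), hrow, div_le_one hvr,
      ENNReal.toReal_le_toReal (ne_top_of_le_ne_top hvt ((measure_mono inter_subset_right).trans
        (hcell i.1).le)) hvt]
    exact (measure_mono inter_subset_right).trans (hcell i.1).le
  have B2 : ∀ j, ∑ i, (volume (X i j)).toReal / v.toReal ≤ 1 := by
    intro j
    rw [← Finset.sum_div, ← ENNReal.toReal_sum (fun i _ => hXt i j), div_le_one hvr,
      ENNReal.toReal_le_toReal (ne_top_of_le_ne_top hvt (hcol j)) hvt]
    exact hcol j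
  have B3 : ∀ i, ∑ j, (volume (X i j)).toReal / v.toReal = 1 ∨ ∀ j, c i j = 0 := by
    intro i
    by_cases hi : cell h i.1 ⊆ U
    · left
      rw [← Finset.sum_div, ← ENNReal.toReal_sum (fun j _ => hXt i j), hrow,
        inter_eq_self_of_subset_right hi, hcell, div_self hvr.ne']
    · right; intro j; simp [hc, hi]
  obtain ⟨π, hπ⟩ := birkhoff_assign (fun i j => (volume (X i j)).toReal / v.toReal) c
    (fun i j => by positivity) B1 B2 B3
  refine ⟨π, ?_⟩
  have hofc : ∀ i j, ENNReal.ofReal (c i j) = if cell h i.1 ⊆ U then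
      ‖u (corner h i.1) - corner h j.1‖ₑ ^ p else 0 := by
    intro i j
    simp only [hc]
    split_ifs
    · rw [← ENNReal.ofReal_rpow_of_nonneg (norm_nonneg _) (by linarith), ofReal_norm]
    · simp
  have step1 : ∑ i : J, (if cell h i.1 ⊆ U then
        volume (cell h i.1) * ‖u (corner h i.1) - corner h (π i).1‖ₑ ^ p else 0) ≤
      ∑ i, ∑ j, volume (X i j) * ENNReal.ofReal (c i j) := by
    have e1 : ∑ i : J, (if cell h i.1 ⊆ U then
        volume (cell h i.1) * ‖u (corner h i.1) - corner h (π i).1‖ₑ ^ p else 0) =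
        v * ENNReal.ofReal (∑ i, c i (π i)) := by
      rw [ENNReal.ofReal_sum_of_nonneg (fun i _ => hc0 _ _), Finset.mul_sum]
      refine Finset.sum_congr rfl fun i _ => ?_
      rw [hofc, hcell]
      split_ifs <;> simp
    have e2 : ∑ i, ∑ j, volume (X i j) * ENNReal.ofReal (c i j) =
        v * ENNReal.ofReal (∑ i, ∑ j, (volume (X i j)).toReal / v.toReal * c i j) := by
      rw [ENNReal.ofReal_sum_of_nonneg (fun i _ => Finset.sum_nonneg fun j _ =>
        mul_nonneg (by positivity) (hc0 _ _)), Finset.mul_sum]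
      refine Finset.sum_congr rfl fun i _ => ?_
      rw [ENNReal.ofReal_sum_of_nonneg (fun j _ => mul_nonneg (by positivity) (hc0 _ _)),
        Finset.mul_sum]
      refine Finset.sum_congr rfl fun j _ => ?_
      rw [ENNReal.ofReal_mul (by positivity), ENNReal.ofReal_div_of_pos hvr, ENNReal.ofReal_toReal (hXt i j),
        ENNReal.ofReal_toReal hvt, ← mul_assoc, ENNReal.mul_div_cancel hv0 hvt]
    rw [e1, e2]
    gcongr
  refine step1.trans ?_
  set g : EuclideanSpace ℝ (Fin n) → ℝ≥0∞ :=
    fun x => (‖u x - S0 x‖ₑ + ENNReal.ofReal ((K + 1) * (n * h))) ^ p with hg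
  have step2 : ∀ i j, volume (X i j) * ENNReal.ofReal (c i j) ≤ ∫⁻ x in X i j, g x := by
    intro i j
    rw [hofc]
    split_ifs with hi
    · rw [mul_comm, ← setLIntegral_const]
      apply setLIntegral_mono' (hXm i j)
      intro x hx
      have hx1 : idx h x = i.1 := hx.1.2
      have hx2 : idx h (S0 x) = j.1 := hx.2
      apply ENNReal.rpow_le_rpow _ (by linarith)
      rw [← ofReal_norm, ← ofReal_norm, ← ENNReal.ofReal_add (norm_nonneg _) (by positivity)]
      apply ENNReal.ofReal_le_ofReal
      have a1 : ‖u (corner h i.1) - u x‖ ≤ K * (n * h) := by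
        rw [← dist_eq_norm]
        refine (hu.dist_le_mul _ _).trans ?_
        gcongr
        rw [dist_eq_norm]
        exact dist_le_of_idx_eq h hh _ _ ((corner_mem h hh i.1).trans hx1.symm)
      have a2 : ‖S0 x - corner h j.1‖ ≤ n * h :=
        dist_le_of_idx_eq h hh _ _ (hx2.trans (corner_mem h hh j.1).symm)
      calc ‖u (corner h i.1) - corner h j.1‖
          = ‖(u (corner h i.1) - u x) + (u x - S0 x) + (S0 x - corner h j.1)‖ := by
            congr 1; abel
        _ ≤ _ := (norm_add₃_le).trans (by linarith)
    · simp
  calc ∑ i, ∑ j, volume (X i j) * ENNReal.ofReal (c i j)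
      ≤ ∑ i, ∑ j, ∫⁻ x in X i j, g x := Finset.sum_le_sum fun i _ => Finset.sum_le_sum fun j _ => step2 i j
    _ = ∑ q : J × J, ∫⁻ x in X q.1 q.2, g x := by rw [Fintype.sum_prod_type]
    _ = ∫⁻ x in ⋃ q ∈ (Finset.univ : Finset (J × J)), X q.1 q.2, g x := by
        rw [lintegral_biUnion_finset _ (fun q _ => hXm q.1 q.2)]
        intro a _ b _ hab
        rw [Function.onFun, Set.disjoint_left]
        rintro x ⟨⟨-, h1⟩, h1'⟩ ⟨⟨-, h2⟩, h2'⟩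
        exact hab (Prod.ext (Subtype.ext (h1.symm.trans h2)) (Subtype.ext (h1'.symm.trans h2')))
    _ ≤ ∫⁻ x in U, g x := by
        apply lintegral_mono_set
        intro x hx
        simp only [mem_iUnion] at hx
        obtain ⟨q, -, hq⟩ := hx
        exact hq.1.1

end assign

section approx
open Filter Topology
open scoped ENNReal
variable {n : ℕ}

lemma measurableSet_badcells (U : Set (EuclideanSpace ℝ (Fin n))) (hU : MeasurableSet U) (h : ℝ) :
    MeasurableSet {x | x ∈ U ∧ ¬ cell h (idx h x) ⊆ U} := by
  have : DiscreteMeasurableSpace (Fin n → ℤ) := inferInstance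
  exact hU.inter (measurable_idx h (MeasurableSet.of_discrete (s := {k | ¬ cell h k ⊆ U})))

lemma fixed_h (hn : 2 ≤ n) {p : ℝ} (hp : 1 < p) (U : Set (EuclideanSpace ℝ (Fin n)))
    (hU : MeasurableSet U)
    (K : NNReal) (u S0 : EuclideanSpace ℝ (Fin n) → EuclideanSpace ℝ (Fin n))
    (hu : LipschitzWith K u) (hS0 : Measurable S0) (h : ℝ) (hh : 0 < h)
    (J : Finset (Fin n → ℤ)) (hUJ : ∀ x ∈ U, idx h x ∈ J)
    (hSJ : ∀ x ∈ U, idx h (S0 x) ∈ J)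
    (hmarg : ∀ k, volume (U ∩ S0 ⁻¹' (cell h k)) ≤ volume (cell h k))
    (R1 R2 : ℝ) (h1 : 0 ≤ R1) (h2 : 0 ≤ R2) (hR1 : ∀ x : EuclideanSpace ℝ (Fin n), idx h x ∈ J → ‖x‖ ≤ R1)
    (hR2 : ∀ x ∈ U, ‖u x‖ ≤ R2) (ε : ℝ≥0∞) (hε : 0 < ε) :
    ∃ M S, GoodS M S ∧ ∫⁻ x in U, ‖u x - S x‖ₑ ^ p ≤
      ε + ENNReal.ofReal (R1 + R2) ^ p * volume {x | x ∈ U ∧ ¬ cell h (idx h x) ⊆ U}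
      + 2 ^ (p - 1) * (∫⁻ x in U, (‖u x - S0 x‖ₑ + ENNReal.ofReal ((K + 1) * (n * h))) ^ p)
      + 2 ^ (p - 1) * (ENNReal.ofReal ((K + 1) * (n * h)) ^ p * volume U) := by
  classical
  obtain ⟨π, hπ⟩ := exists_assign hp U hU K u S0 hu hS0 h hh J hSJ hmarg
  obtain ⟨M, hM⟩ := approx_perm hn h hh J π
  set two : ℝ≥0∞ := 2 ^ (p - 1) with htwo
  have htwot : two ≠ ∞ := ENNReal.rpow_ne_top_of_nonneg (by linarith) (by simp)
  set δ := ENNReal.ofReal ((K + 1) * (n * h)) with hδ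
  set CM : ℝ≥0∞ := ENNReal.ofReal (|M| + R1 + R2) ^ p with hCM
  have hCMt : CM ≠ ∞ := ENNReal.rpow_ne_top_of_nonneg (by linarith) (by simp)
  have hε' : 0 < ε / (CM + 1) := ENNReal.div_pos hε.ne' (by simp [hCMt])
  obtain ⟨S, hS, hb⟩ := hM _ hε'
  refine ⟨M, S, hS, ?_⟩
  set B0 := {x : EuclideanSpace ℝ (Fin n) |
      ∃ hx : idx h x ∈ J, idx h (S x) ≠ π ⟨idx h x, hx⟩} with hB0
  set B := toMeasurable volume B0 with hB
  have hBm : MeasurableSet B := measurableSet_toMeasurable _ _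
  have hBv : volume B ≤ ε / (CM + 1) := by rw [hB, measure_toMeasurable]; exact hb
  set W := {x | x ∈ U ∧ ¬ cell h (idx h x) ⊆ U} with hW
  have hWm : MeasurableSet W := measurableSet_badcells U hU h
  set C5 := ENNReal.ofReal (R1 + R2) ^ p with hC5
  set c : J → ℝ≥0∞ := fun i => ‖u (corner h i.1) - corner h (π i).1‖ₑ ^ p with hc
  set G : J → EuclideanSpace ℝ (Fin n) → ℝ≥0∞ := fun i =>
    if cell h i.1 ⊆ U then (cell h i.1).indicator (fun _ => two * (c i + δ ^ p)) else 0 with hG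
  have hGm : ∀ i, Measurable (G i) := by
    intro i
    simp only [hG]
    split_ifs
    · exact measurable_const.indicator (measurableSet_cell _ _)
    · exact measurable_const
  have hpt : ∀ x ∈ U, ‖u x - S x‖ₑ ^ p ≤
      B.indicator (fun _ => CM) x + W.indicator (fun _ => C5) x + ∑ i, G i x := by
    intro x hx
    have hxJ := hUJ x hx
    by_cases hxB : x ∈ B
    · refine le_trans ?_ (le_add_right (le_add_right le_rfl))
      rw [indicator_of_mem hxB]
      apply ENNReal.rpow_le_rpow _ (by linarith)
      rw [← ofReal_norm]
      apply ENNReal.ofReal_le_ofReal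
      have a1 := hS.disp x
      rw [dist_eq_norm] at a1
      have a2 := hR1 x hxJ
      have a3 := hR2 x hx
      have a4 := le_abs_self M
      calc ‖u x - S x‖ = ‖u x + (-x) + (-(S x - x))‖ := by congr 1; abel
        _ ≤ _ := norm_add₃_le.trans (by rw [norm_neg, norm_neg]; linarith)
    · have hxS : idx h (S x) = π ⟨idx h x, hxJ⟩ := by
        by_contra hcon
        exact hxB (subset_toMeasurable _ _ ⟨hxJ, hcon⟩)
      by_cases hxW : x ∈ W
      · refine le_trans ?_ (le_add_right (le_add_left le_rfl))
        rw [indicator_of_mem hxW]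
        apply ENNReal.rpow_le_rpow _ (by linarith)
        rw [← ofReal_norm]
        apply ENNReal.ofReal_le_ofReal
        have a2 := hR1 (S x) (by rw [hxS]; exact (π _).2)
        have a3 := hR2 x hx
        exact (norm_sub_le _ _).trans (by linarith)
      · refine le_trans ?_ (le_add_left (Finset.single_le_sum (f := fun i => G i x) (fun i _ => zero_le)
          (Finset.mem_univ ⟨idx h x, hxJ⟩)))
        have hsub : cell h (idx h x) ⊆ U := by
          by_contra hcon; exact hxW ⟨hx, hcon⟩
        simp only [hG, if_pos hsub]
        rw [indicator_of_mem (show x ∈ cell h (idx h x) from rfl)]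
        refine le_trans ?_ (ENNReal.rpow_add_le_mul_rpow_add_rpow _ _ hp.le)
        apply ENNReal.rpow_le_rpow _ (by linarith)
        rw [← ofReal_norm, ← ofReal_norm, ← ENNReal.ofReal_add (norm_nonneg _) (by positivity)]
        apply ENNReal.ofReal_le_ofReal
        have a1 : ‖u x - u (corner h (idx h x))‖ ≤ K * (n * h) := by
          rw [← dist_eq_norm]
          refine (hu.dist_le_mul _ _).trans ?_
          gcongr
          rw [dist_eq_norm]
          exact dist_le_of_idx_eq h hh _ _ (corner_mem h hh _).symm
        have a2 : ‖corner h (π ⟨idx h x, hxJ⟩).1 - S x‖ ≤ n * h :=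
          dist_le_of_idx_eq h hh _ _ ((corner_mem h hh _).trans hxS.symm)
        calc ‖u x - S x‖ = ‖(u x - u (corner h (idx h x))) +
              (u (corner h (idx h x)) - corner h (π ⟨idx h x, hxJ⟩).1) +
              (corner h (π ⟨idx h x, hxJ⟩).1 - S x)‖ := by congr 1; abel
          _ ≤ _ := norm_add₃_le.trans (by linarith)
  have hsumcell : ∑ i : J, (if cell h i.1 ⊆ U then volume (cell h i.1) else 0) ≤ volume U := by
    rw [← Finset.sum_filter, ← measure_biUnion_finset (fun a _ b _ hab => ?_) (fun i _ => measurableSet_cell h _)]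
    · apply measure_mono
      intro x hx
      simp only [mem_iUnion] at hx
      obtain ⟨i, hi, hx⟩ := hx
      exact (Finset.mem_filter.mp hi).2 hx
    · rw [Function.onFun, Set.disjoint_left]
      intro x h1 h2
      exact hab (Subtype.ext (h1.symm.trans h2))
  have hGi : ∀ i, ∫⁻ x in U, G i x ≤ two * (if cell h i.1 ⊆ U then volume (cell h i.1) * c i else 0)
      + two * (δ ^ p * (if cell h i.1 ⊆ U then volume (cell h i.1) else 0)) := by
    intro i
    refine (setLIntegral_le_lintegral _ _).trans ?_
    simp only [hG]
    split_ifs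
    · rw [lintegral_indicator_const (measurableSet_cell _ _)]
      apply le_of_eq; ring
    · simp
  calc ∫⁻ x in U, ‖u x - S x‖ₑ ^ p
      ≤ ∫⁻ x in U, (B.indicator (fun _ => CM) x + W.indicator (fun _ => C5) x + ∑ i, G i x) :=
        setLIntegral_mono' hU hpt
    _ = (∫⁻ x in U, B.indicator (fun _ => CM) x) + (∫⁻ x in U, W.indicator (fun _ => C5) x) +
        ∑ i, ∫⁻ x in U, G i x := by
        rw [lintegral_add_left, lintegral_add_left, lintegral_finsetSum]
        · exact fun i _ => hGm i
        · exact measurable_const.indicator hBm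
        · exact (measurable_const.indicator hBm).add (measurable_const.indicator hWm)
    _ ≤ ε + C5 * volume W + (two * (∑ i : J, if cell h i.1 ⊆ U then volume (cell h i.1) * c i else 0) + two * (δ ^ p * volume U)) := by
        refine add_le_add (add_le_add ?_ ?_) ?_
        · refine (setLIntegral_le_lintegral _ _).trans ?_
          rw [lintegral_indicator_const hBm]
          calc CM * volume B ≤ (CM + 1) * (ε / (CM + 1)) := by
                gcongr; exact le_self_add
            _ ≤ ε := ENNReal.mul_div_le
        · refine (setLIntegral_le_lintegral _ _).trans ?_
          rw [lintegral_indicator_const hWm]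
        · refine (Finset.sum_le_sum fun i _ => hGi i).trans ?_
          rw [Finset.sum_add_distrib, ← Finset.mul_sum, ← Finset.mul_sum, ← Finset.mul_sum]
          gcongr
    _ ≤ _ := by
        rw [← add_assoc]
        gcongr

lemma prop_approx (hn : 2 ≤ n) {p : ℝ} (hp : 1 < p) (U : Set (EuclideanSpace ℝ (Fin n)))
    (hUo : IsOpen U) (hUb : IsBounded U)
    (K : NNReal) (u S0 : EuclideanSpace ℝ (Fin n) → EuclideanSpace ℝ (Fin n))
    (hu : LipschitzWith K u) (hS0 : Measurable S0) (R : ℝ) (hR : ∀ x ∈ U, ‖S0 x‖ ≤ R)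
    (hmarg : ∀ h : ℝ, 0 < h → ∀ k, volume (U ∩ S0 ⁻¹' (cell h k)) ≤ volume (cell h k))
    (η : ℝ≥0∞) (hη : 0 < η) :
    ∃ M S, GoodS M S ∧ ∫⁻ x in U, ‖u x - S x‖ₑ ^ p ≤
      2 ^ (p - 1) * (2 ^ (p - 1) * ∫⁻ x in U, ‖u x - S0 x‖ₑ ^ p) + η := by
  obtain ⟨R0, hR0⟩ := hUb.exists_norm_le
  have huU : IsBounded (u '' U) := hu.isBounded_image hUb
  obtain ⟨R2, hR2⟩ := huU.exists_norm_le
  set r := |R0| + |R| + 1 with hr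
  have hrpos : 0 < r := by positivity
  set hN : ℕ → ℝ := fun N => r / (N + 1) with hhN
  have hhNpos : ∀ N, 0 < hN N := fun N => by positivity
  have hhlim : Tendsto hN atTop (𝓝 0) := by
    have := (tendsto_one_div_add_atTop_nhds_zero_nat (𝕜 := ℝ)).const_mul r
    simpa [hhN, div_eq_mul_inv] using this
  set two : ℝ≥0∞ := 2 ^ (p - 1) with htwo
  have htwot : two ≠ ∞ := ENNReal.rpow_ne_top_of_nonneg (by linarith) (by simp)
  set C5 := ENNReal.ofReal (n * r + |R2|) ^ p with hC5
  have hC5t : C5 ≠ ∞ := ENNReal.rpow_ne_top_of_nonneg (by linarith) (by simp)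
  set δ : ℕ → ℝ≥0∞ := fun N => ENNReal.ofReal ((K + 1) * (n * hN N)) with hδ
  have hδlim : Tendsto (fun N => δ N ^ p) atTop (𝓝 0) := by
    have h1 : Tendsto (fun N => (K + 1 : ℝ) * (n * hN N)) atTop (𝓝 0) := by
      simpa using (hhlim.const_mul (n : ℝ)).const_mul (K + 1 : ℝ)
    have h2 : Tendsto δ atTop (𝓝 0) := by
      simpa using ENNReal.tendsto_ofReal h1
    have h3 := h2.ennrpow_const p
    rwa [ENNReal.zero_rpow_of_pos (by linarith)] at h3
  have hUv : volume U ≠ ∞ := hUb.measure_lt_top.ne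
  have hWlim : Tendsto (fun N => volume {x | x ∈ U ∧ ¬ cell (hN N) (idx (hN N) x) ⊆ U}) atTop (𝓝 0) := by
    apply tendsto_measure_of_eventually_notMem volume U hUv
    · exact fun N => measurableSet_badcells U hUo.measurableSet _
    · exact fun N x hx => hx.1
    · intro x
      by_cases hx : x ∈ U
      · obtain ⟨ε, hε, hball⟩ := Metric.isOpen_iff.mp hUo x hx
        have : ∀ᶠ N in atTop, n * hN N < ε := by
          have h1 := hhlim.const_mul (n : ℝ)
          rw [mul_zero] at h1
          exact h1.eventually (gt_mem_nhds hε)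
        filter_upwards [this] with N hN'
        rintro ⟨-, h2⟩
        apply h2
        intro y hy
        apply hball
        rw [mem_ball, dist_eq_norm]
        exact (dist_le_of_idx_eq _ (hhNpos N) _ _ hy).trans_lt hN'
      · exact Eventually.of_forall fun N h => hx h.1
  have herr : Tendsto (fun N => C5 * volume {x | x ∈ U ∧ ¬ cell (hN N) (idx (hN N) x) ⊆ U} +
      (two * (two * (δ N ^ p * volume U)) + two * (δ N ^ p * volume U))) atTop (𝓝 0) := by
    have t1 := ENNReal.Tendsto.const_mul (a := C5) hWlim (Or.inr hC5t)
    have t2 := ENNReal.Tendsto.mul_const (b := volume U) hδlim (Or.inr hUv)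
    rw [zero_mul] at t2
    have t3 := ENNReal.Tendsto.const_mul (a := two) t2 (Or.inr htwot)
    rw [mul_zero] at t3
    have t4 := ENNReal.Tendsto.const_mul (a := two) t3 (Or.inr htwot)
    have := t1.add (t4.add t3)
    simpa using this
  obtain ⟨N, hNerr⟩ := (herr.eventually (ge_mem_nhds (ENNReal.half_pos hη.ne'))).exists
  set h := hN N with hh
  have hhp : 0 < h := hhNpos N
  have hdiv : ∀ t : ℝ, t / h = t / r * (N + 1) := by
    intro t; rw [hh]; simp only [hhN]; field_simp
  have hidx : ∀ x : EuclideanSpace ℝ (Fin n), ‖x‖ < r → idx h x ∈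
      Fintype.piFinset (fun _ : Fin n => Finset.Ico (-(N + 1) : ℤ) (N + 1)) := by
    intro x hx
    rw [Fintype.mem_piFinset]
    intro j
    have hj := abs_lt.mp ((coord_le_norm x j).trans_lt hx)
    have b1 : -1 ≤ x j / r := by rw [le_div_iff₀ hrpos]; linarith
    have b2 : x j / r < 1 := by rw [div_lt_iff₀ hrpos]; linarith
    have hN1 : (0 : ℝ) < N + 1 := by positivity
    rw [Finset.mem_Ico]
    simp only [idx]
    rw [Int.le_floor, Int.floor_lt, hdiv]
    push_cast
    constructor <;> nlinarith
  obtain ⟨M, S, hS, hfin⟩ := fixed_h hn hp U hUo.measurableSet K u S0 hu hS0 h hhp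
    (Fintype.piFinset (fun _ : Fin n => Finset.Ico (-(N + 1) : ℤ) (N + 1)))
    (fun x hx => hidx x (by have := hR0 x hx; have := le_abs_self R0; have := abs_nonneg R; rw [hr]; linarith))
    (fun x hx => hidx _ (by have := hR x hx; have := le_abs_self R; have := abs_nonneg R0; rw [hr]; linarith))
    (hmarg h hhp) (n * r) |R2| (by positivity) (by positivity) (by
      intro x hx
      apply norm_le_of_coord _ _ hrpos.le
      intro j
      rw [Fintype.mem_piFinset] at hx
      have := hx j
      rw [Finset.mem_Ico] at this
      simp only [idx] at this
      rw [Int.le_floor, Int.floor_lt, hdiv] at this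
      push_cast at this
      have hN1 : (0 : ℝ) < N + 1 := by positivity
      have b1 : -1 ≤ x j / r := by by_contra hc; push Not at hc; nlinarith [this.1]
      have b2 : x j / r ≤ 1 := by by_contra hc; push Not at hc; nlinarith [this.2]
      rw [le_div_iff₀ hrpos] at b1
      rw [div_le_iff₀ hrpos] at b2
      exact abs_le.mpr ⟨by linarith, by linarith⟩)
    (fun x hx => (hR2 _ (mem_image_of_mem u hx)).trans (le_abs_self _)) (η / 2) (ENNReal.half_pos hη.ne')
  refine ⟨M, S, hS, hfin.trans ?_⟩
  have key : ∫⁻ x in U, (‖u x - S0 x‖ₑ + δ N) ^ p ≤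
      two * (∫⁻ x in U, ‖u x - S0 x‖ₑ ^ p) + two * (δ N ^ p * volume U) := by
    calc _ ≤ ∫⁻ x in U, (two * ‖u x - S0 x‖ₑ ^ p + two * δ N ^ p) := by
          apply lintegral_mono
          intro x
          simp only []
          rw [← mul_add]
          exact ENNReal.rpow_add_le_mul_rpow_add_rpow _ _ hp.le
      _ = _ := by
          have hm : Measurable (fun x => ‖u x - S0 x‖ₑ ^ p) :=
            ((hu.continuous.measurable.sub hS0).enorm).pow_const p
          rw [lintegral_add_right _ measurable_const, lintegral_const_mul _ hm, lintegral_const]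
          simp [mul_assoc]
  calc _ ≤ η / 2 + C5 * volume {x | x ∈ U ∧ ¬ cell h (idx h x) ⊆ U} + two * (two * (∫⁻ x in U, ‖u x - S0 x‖ₑ ^ p) + two * (δ N ^ p * volume U)) + two * (δ N ^ p * volume U) := by
        gcongr
    _ = two * (two * ∫⁻ x in U, ‖u x - S0 x‖ₑ ^ p) + (η / 2 + (C5 * volume {x | x ∈ U ∧ ¬ cell h (idx h x) ⊆ U} +
      (two * (two * (δ N ^ p * volume U)) + two * (δ N ^ p * volume U)))) := by ring
    _ ≤ two * (two * ∫⁻ x in U, ‖u x - S0 x‖ₑ ^ p) + (η / 2 + η / 2) := by gcongr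
    _ = _ := by rw [ENNReal.add_halves]
end approx

section cov
open Filter Topology
open scoped ENNReal
variable {n : ℕ}

lemma null_of_image_null {f : EuclideanSpace ℝ (Fin n) → EuclideanSpace ℝ (Fin n)}
    {s : Set (EuclideanSpace ℝ (Fin n))}
    (f' : EuclideanSpace ℝ (Fin n) → EuclideanSpace ℝ (Fin n) →L[ℝ] EuclideanSpace ℝ (Fin n))
    (hf' : ∀ x ∈ s, HasFDerivWithinAt f (f' x) s x) (hdet : ∀ x ∈ s, (f' x).det ≠ 0)
    (h0 : volume (f '' s) = 0) : volume s = 0 := by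
  have key : ∀ A : EuclideanSpace ℝ (Fin n) →L[ℝ] EuclideanSpace ℝ (Fin n),
      ∃ δ : NNReal, δ ≠ 0 ∧ (A.det ≠ 0 → ∃ m : NNReal, 0 < m ∧ 
        ∀ (s : Set (EuclideanSpace ℝ (Fin n))) (g : EuclideanSpace ℝ (Fin n) → EuclideanSpace ℝ (Fin n)),
          ApproximatesLinearOn g A s δ → (m : ℝ≥0∞) * volume s ≤ volume (g '' s)) := by
    intro A
    by_cases hA : A.det = 0
    · exact ⟨1, one_ne_zero, fun h => absurd hA h⟩
    · have h1 : (0:ℝ≥0∞) < ENNReal.ofReal |A.det| := by simpa using hA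
      obtain ⟨m, hm0, hm1⟩ := ENNReal.lt_iff_exists_nnreal_btwn.1 h1
      have := mul_le_addHaar_image_of_lt_det volume A hm1
      rcases (this.and self_mem_nhdsWithin).exists with ⟨δ, h, h'⟩
      exact ⟨δ, (ne_of_gt h'), fun _ => ⟨m, by exact_mod_cast hm0, h⟩⟩
  choose r hr0 hr using key
  obtain ⟨t, A, -, -, hst, happ, hA⟩ :=
    exists_partition_approximatesLinearOn_of_hasFDerivWithinAt f s f' hf' r hr0
  rcases s.eq_empty_or_nonempty with rfl | hne
  · simp
  have hs : s = ⋃ k, s ∩ t k := by rw [← inter_iUnion]; exact (inter_eq_left.2 hst).symm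
  rw [hs, measure_iUnion_null_iff]
  intro k
  obtain ⟨y, hy, hAy⟩ := hA hne k
  obtain ⟨m, hm, hm2⟩ := hr (A k) (by rw [hAy]; exact hdet y hy)
  have h3 := hm2 _ _ (happ k)
  have h4 : volume (f '' (s ∩ t k)) = 0 :=
    measure_mono_null (image_mono inter_subset_left) h0
  rw [h4] at h3
  have h5 := le_antisymm h3 (zero_le)
  rcases mul_eq_zero.1 h5 with h | h
  · simp at h; exact absurd h hm.ne'
  · exact h

lemma measurable_detD (u : EuclideanSpace ℝ (Fin n) → EuclideanSpace ℝ (Fin n)) :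
    Measurable (detD u) :=
  ContinuousLinearMap.continuous_det.measurable.comp (measurable_fderiv ℝ u)

lemma exists_cov {U : Set (EuclideanSpace ℝ (Fin n))} (hU : MeasurableSet U)
    {u : EuclideanSpace ℝ (Fin n) → EuclideanSpace ℝ (Fin n)} (hu : Continuous u)
    (hmult : multOn U u = 1) {lam Lam : ℝ} (hlam : 0 < lam)
    (hae : ∀ᵐ x ∂(volume.restrict U), DifferentiableAt ℝ u x ∧
            lam ≤ detD u x ∧ detD u x ≤ Lam) :
    ∃ (W : Set (EuclideanSpace ℝ (Fin n))) (σ : EuclideanSpace ℝ (Fin n) → ℝ),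
      MeasurableSet W ∧ W ⊆ U ∧ volume (U \ W) = 0 ∧ InjOn u W ∧
      (∀ x ∈ W, DifferentiableAt ℝ u x ∧ lam ≤ detD u x ∧ detD u x ≤ Lam) ∧
      Measurable σ ∧ (∀ x ∈ W, σ (u x) = (detD u x)⁻¹) ∧ (∀ y, y ∉ u '' W → σ y = 1) ∧
      MeasurableSet (u '' W) := by
  have h1 : ∀ᵐ y ∂(volume : Measure (EuclideanSpace ℝ (Fin n))), (U ∩ u ⁻¹' {y}).encard ≤ 1 := by
    have := ae_le_essSup (f := fun y => (U ∩ u ⁻¹' {y}).encard) 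
      (μ := (volume : Measure (EuclideanSpace ℝ (Fin n))))
    filter_upwards [this] with y hy
    exact hy.trans (le_of_eq hmult)
  obtain ⟨N, hNsub, hNm, hN0⟩ := exists_measurable_superset_of_null (ae_iff.1 h1)
  set D : Set (EuclideanSpace ℝ (Fin n)) :=
    U ∩ {x | DifferentiableAt ℝ u x ∧ lam ≤ detD u x ∧ detD u x ≤ Lam} with hD
  have hDm : MeasurableSet D := by
    refine hU.inter ((measurableSet_of_differentiableAt ℝ u).inter ?_)
    exact (measurableSet_le measurable_const (measurable_detD u)).inter
      (measurableSet_le (measurable_detD u) measurable_const)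
  have hUD : volume (U \ D) = 0 := by
    rw [ae_restrict_iff' hU] at hae
    refine measure_mono_null ?_ (ae_iff.1 hae)
    rintro x ⟨hxU, hxD⟩ hx
    exact hxD ⟨hxU, hx hxU⟩
  have hDN : volume (D ∩ u ⁻¹' N) = 0 := by
    refine null_of_image_null (f := u) (fun x => fderiv ℝ u x) ?_ ?_ ?_
    · exact fun x hx => hx.1.2.1.hasFDerivAt.hasFDerivWithinAt
    · intro x hx
      have : 0 < detD u x := hlam.trans_le hx.1.2.2.1
      exact this.ne'
    · refine measure_mono_null ?_ hN0
      rintro _ ⟨x, hx, rfl⟩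
      exact hx.2
  set W := D \ u ⁻¹' N with hW
  have hWm : MeasurableSet W := hDm.diff (hu.measurable hNm)
  have hinj : InjOn u W := by
    intro x hx y hy hxy
    have h : u x ∉ N := hx.2
    have h2 : (U ∩ u ⁻¹' {u x}).encard ≤ 1 := by
      by_contra hc
      exact h (hNsub hc)
    exact Set.encard_le_one_iff.1 h2 x y ⟨hx.1.1, rfl⟩ ⟨hy.1.1, hxy.symm⟩
  have hemb := ContinuousOn.measurableEmbedding hWm hu.continuousOn hinj
  refine ⟨W, Function.extend (W.domRestrict u) (fun x => (detD u x)⁻¹) (fun _ => 1), hWm,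
    fun x hx => hx.1.1, ?_, hinj, fun x hx => hx.1.2, ?_, ?_, ?_, ?_⟩
  · refine measure_mono_null ?_ (measure_union_null hUD hDN)
    rintro x ⟨hxU, hxW⟩
    by_cases hxD : x ∈ D
    · right
      refine ⟨hxD, ?_⟩
      by_contra hc
      exact hxW ⟨hxD, hc⟩
    · left; exact ⟨hxU, hxD⟩
  · exact hemb.measurable_extend (((measurable_detD u).comp measurable_subtype_coe).inv)
      measurable_const
  · intro x hx
    exact hemb.injective.extend_apply (fun x : W => (detD u x)⁻¹) _ ⟨x, hx⟩
  · intro y hy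
    apply Function.extend_apply'
    rintro ⟨a, rfl⟩
    exact hy ⟨a, a.2, rfl⟩
  · exact hWm.image_of_continuousOn_injOn hu.continuousOn hinj

lemma cov_formula {W : Set (EuclideanSpace ℝ (Fin n))} (hWm : MeasurableSet W)
    {u : EuclideanSpace ℝ (Fin n) → EuclideanSpace ℝ (Fin n)} (hinj : InjOn u W)
    {lam : ℝ} (hlam : 0 < lam)
    (hd : ∀ x ∈ W, DifferentiableAt ℝ u x ∧ lam ≤ detD u x) (g : EuclideanSpace ℝ (Fin n) → ℝ≥0∞) :
    ∫⁻ y in u '' W, g y = ∫⁻ x in W, ENNReal.ofReal (detD u x) * g (u x) := by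
  rw [lintegral_image_eq_lintegral_abs_det_fderiv_mul volume hWm
    (fun x hx => (hd x hx).1.hasFDerivAt.hasFDerivWithinAt) hinj g]
  refine setLIntegral_congr_fun hWm (fun x hx => ?_)
  have : |(fderiv ℝ u x).det| = detD u x := abs_of_pos (hlam.trans_le (hd x hx).2)
  simp only [this]
end cov

section knothe
open Filter Topology
open scoped ENNReal

lemma lintegral_pow_le {α : Type*} [MeasurableSpace α] (μ : Measure α) {p : ℝ} (hp : 1 < p)
    {f : α → ℝ≥0∞} (hf : AEMeasurable f μ) :
    (∫⁻ x, f x ∂μ) ^ p ≤ μ univ ^ (p - 1) * ∫⁻ x, f x ^ p ∂μ := by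
  have hp0 : 0 < p := by linarith
  have hc : p.HolderConjugate (p / (p - 1)) := Real.HolderConjugate.conjExponent hp
  have h := ENNReal.lintegral_mul_le_Lp_mul_Lq μ hc hf (g := fun _ => 1) aemeasurable_const
  simp only [Pi.mul_apply, mul_one, ENNReal.one_rpow, lintegral_const, one_mul] at h
  calc (∫⁻ x, f x ∂μ) ^ p ≤ ((∫⁻ x, f x ^ p ∂μ) ^ (1 / p) * μ univ ^ (1 / (p / (p - 1)))) ^ p :=
        ENNReal.rpow_le_rpow h hp0.le
    _ = μ univ ^ (p - 1) * ∫⁻ x, f x ^ p ∂μ := by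
        rw [ENNReal.mul_rpow_of_nonneg _ _ hp0.le, ← ENNReal.rpow_mul, ← ENNReal.rpow_mul, mul_comm]
        congr 2
        · field_simp
        · rw [one_div, inv_mul_cancel₀ hp0.ne', ENNReal.rpow_one]

lemma one_dim_mass {τ : ℝ → ℝ} (hτ : Measurable τ) {M a d : ℝ} (hM : ∀ s, |τ s| ≤ M)
    (h1 : ∀ s, -1 ≤ τ s) (hsupp : ∀ s, s ∉ Icc a (a + d) → τ s = 0) (α β : ℝ) :
    ∫⁻ s in {t | t + (∫ s in Iic t, τ s) ∈ Ico α β}, ENNReal.ofReal (1 + τ s)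
      ≤ ENNReal.ofReal (β - α) := by
  have hTauInt : Integrable τ := by
    have : IntegrableOn τ (Icc a (a + d)) :=
      Measure.integrableOn_of_bounded (M := M) (by simp) hτ.aestronglyMeasurable
        (Eventually.of_forall fun s => by simpa using hM s)
    refine (integrableOn_iff_integrable_of_support_subset ?_).1 this
    intro s hs
    by_contra hc
    exact hs (hsupp s hc)
  set T : ℝ → ℝ := fun t => t + ∫ s in Iic t, τ s with hT
  have hii : ∀ x y : ℝ, IntervalIntegrable (fun s => 1 + τ s) volume x y := fun x y =>
    (intervalIntegrable_const).add hTauInt.intervalIntegrable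
  have hdiff : ∀ x y : ℝ, T y - T x = ∫ s in x..y, (1 + τ s) := by
    intro x y
    rw [intervalIntegral.integral_add intervalIntegrable_const hTauInt.intervalIntegrable,
      ← intervalIntegral.integral_Iic_sub_Iic hTauInt.integrableOn hTauInt.integrableOn]
    simp [hT]; ring
  have hcont : Continuous T := by
    have : T = fun y => T 0 + ∫ s in (0:ℝ)..y, (1 + τ s) := by
      funext y; rw [← hdiff]; ring
    rw [this]
    exact continuous_const.add (intervalIntegral.continuous_primitive hii 0)
  have hbd : ∀ t, |T t - t| ≤ ∫ s, |τ s| := by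
    intro t
    simp only [hT, add_sub_cancel_left]
    calc |∫ s in Iic t, τ s| ≤ ∫ s in Iic t, |τ s| := abs_integral_le_integral_abs
      _ ≤ ∫ s, |τ s| := setIntegral_le_integral hTauInt.abs (Eventually.of_forall fun s => abs_nonneg _)
  set A := {t | T t ∈ Ico α β} with hA
  change ∫⁻ s in A, ENNReal.ofReal (1 + τ s) ≤ _
  rcases A.eq_empty_or_nonempty with h0 | hne
  · rw [h0]; simp
  set C := ∫ s, |τ s|
  have hbA : BddAbove A := ⟨β + C, fun t ht => by
    have := abs_le.1 (hbd t); have := ht.2; linarith⟩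
  have hbB : BddBelow A := ⟨α - C, fun t ht => by
    have := abs_le.1 (hbd t); have := ht.1; linarith⟩
  have hcl : closure A ⊆ T ⁻¹' Icc α β :=
    closure_minimal (fun t ht => ⟨ht.1, ht.2.le⟩) (isClosed_Icc.preimage hcont)
  have hs := hcl (csInf_mem_closure hne hbB)
  have ht := hcl (csSup_mem_closure hne hbA)
  have hst : sInf A ≤ sSup A := csInf_le_csSup hne hbB hbA
  calc ∫⁻ s in A, ENNReal.ofReal (1 + τ s)
      ≤ ∫⁻ s in Icc (sInf A) (sSup A), ENNReal.ofReal (1 + τ s) :=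
        lintegral_mono_set (subset_Icc_csInf_csSup hbB hbA)
    _ = ∫⁻ s in Ioc (sInf A) (sSup A), ENNReal.ofReal (1 + τ s) := by
        rw [restrict_Ioc_eq_restrict_Icc]
    _ = ENNReal.ofReal (∫ s in Ioc (sInf A) (sSup A), (1 + τ s)) := by
        rw [ofReal_integral_eq_lintegral_ofReal]
        · exact (hii _ _).1
        · exact Eventually.of_forall fun s => by have := h1 s; simp; linarith
    _ = ENNReal.ofReal (T (sSup A) - T (sInf A)) := by
        rw [hdiff, intervalIntegral.integral_of_le hst]
    _ ≤ ENNReal.ofReal (β - α) := ENNReal.ofReal_le_ofReal (by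
        have := hs.1; have := ht.2; linarith)

lemma one_dim_pow {τ : ℝ → ℝ} (hτ : Measurable τ) {a d p : ℝ} (hp : 1 < p)
    (hsupp : ∀ s, s ∉ Icc a (a + d) → τ s = 0) (t : ℝ) :
    ‖∫ s in Iic t, τ s‖ₑ ^ p ≤ ENNReal.ofReal d ^ (p - 1) * ∫⁻ s, ‖τ s‖ₑ ^ p := by
  have hp0 : 0 < p := by linarith
  calc ‖∫ s in Iic t, τ s‖ₑ ^ p ≤ (∫⁻ s in Icc a (a+d), ‖τ s‖ₑ) ^ p := by
        apply ENNReal.rpow_le_rpow _ hp0.le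
        refine (enorm_integral_le_lintegral_enorm _).trans ?_
        refine (setLIntegral_le_lintegral _ _).trans (le_of_eq ?_)
        rw [← lintegral_indicator measurableSet_Icc]
        congr 1; funext s
        by_cases hs : s ∈ Icc a (a+d)
        · rw [indicator_of_mem hs]
        · rw [indicator_of_notMem hs, hsupp s hs]; simp
    _ ≤ (volume.restrict (Icc a (a+d)) univ) ^ (p - 1) * ∫⁻ s in Icc a (a+d), ‖τ s‖ₑ ^ p :=
        lintegral_pow_le _ hp hτ.enorm.aemeasurable
    _ ≤ _ := by
        gcongr
        · simp
        · exact Measure.restrict_le_self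

end knothe

section knothe2
open Filter Topology
open scoped ENNReal

lemma knothe {m : ℕ} (i : Fin (m + 1)) {σ : EuclideanSpace ℝ (Fin (m + 1)) → ℝ}
    (hσ : Measurable σ) {M : ℝ} (h0 : ∀ y, 0 ≤ σ y) (hM : ∀ y, |σ y - 1| ≤ M)
    {V : Set (EuclideanSpace ℝ (Fin (m + 1)))} (hV : MeasurableSet V)
    (hσV : ∀ y, y ∉ V → σ y = 1) {d : ℝ} (hd0 : 0 ≤ d)
    (hd : ∀ x ∈ V, ∀ y ∈ V, |x i - y i| ≤ d) {p : ℝ} (hp : 1 < p) :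
    ∃ G : EuclideanSpace ℝ (Fin (m + 1)) → ℝ, Measurable G ∧ (∃ B, ∀ y, |G y| ≤ B) ∧
      (∫⁻ y in V, ‖G y‖ₑ ^ p ≤ ENNReal.ofReal d ^ p * ∫⁻ y in V, ‖σ y - 1‖ₑ ^ p) ∧
      ∀ h k, 0 < h → ∫⁻ y in {y | y + G y • EuclideanSpace.single i 1 ∈ cell h k}, ENNReal.ofReal (σ y)
        ≤ volume (cell h k) := by
  have hp0 : 0 < p := by linarith
  set e := splitEquiv i with he
  have hmp : MeasurePreserving e volume volume := splitEquiv_mp i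
  have hmps : MeasurePreserving e.symm volume volume := hmp.symm e
  set τ : (Fin m → ℝ) × ℝ → ℝ := fun q => σ (e.symm q) - 1 with hτ
  have hτm : Measurable τ := (hσ.comp e.symm.measurable).sub_const 1
  have hsl : ∀ a : Fin m → ℝ, ∃ c : ℝ, ∀ s, e.symm (a, s) ∈ V → s ∈ Icc c (c + d) := by
    intro a
    by_cases hne : ∃ s, e.symm (a, s) ∈ V
    · have key : ∀ s t, e.symm (a, s) ∈ V → e.symm (a, t) ∈ V → |s - t| ≤ d := by
        intro s t hs ht
        have := hd _ hs _ ht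
        have h2 : ∀ s, (e.symm (a, s)) i = s := fun s => by
          have := congrArg Prod.snd (e.apply_symm_apply (a, s))
          rwa [he, splitEquiv_apply] at this
        rwa [h2, h2] at this
      obtain ⟨s0, hs0⟩ := hne
      have hb : BddBelow {s | e.symm (a, s) ∈ V} := ⟨s0 - d, fun s hs => by
        have := (abs_le.1 (key s s0 hs hs0)).1; linarith⟩
      refine ⟨sInf {s | e.symm (a, s) ∈ V}, fun s hs => ⟨csInf_le hb hs, ?_⟩⟩
      have : s - d ≤ sInf {s | e.symm (a, s) ∈ V} := le_csInf ⟨s0, hs0⟩ fun t ht => by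
        have := (abs_le.1 (key s t hs ht)).2; linarith
      linarith
    · exact ⟨0, fun s hs => absurd ⟨s, hs⟩ hne⟩
  choose c hc using hsl
  have hsupp : ∀ a s, s ∉ Icc (c a) (c a + d) → τ (a, s) = 0 := by
    intro a s hs
    have : e.symm (a, s) ∉ V := fun h => hs (hc a s h)
    simp [hτ, hσV _ this]
  set g : (Fin m → ℝ) × ℝ → ℝ := fun q => ∫ s in Iic q.2, τ (q.1, s) with hg
  have hgm : Measurable g := by
    have h1 : g = fun q => ∫ s, (fun z : ((Fin m → ℝ) × ℝ) × ℝ =>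
        {z : ((Fin m → ℝ) × ℝ) × ℝ | z.2 ≤ z.1.2}.indicator (fun z => τ (z.1.1, z.2)) z) (q, s) := by
      funext q
      rw [hg]
      simp only
      rw [← integral_indicator measurableSet_Iic]
      rfl
    rw [h1]
    have h2 : Measurable (fun z : ((Fin m → ℝ) × ℝ) × ℝ =>
        {z : ((Fin m → ℝ) × ℝ) × ℝ | z.2 ≤ z.1.2}.indicator (fun z => τ (z.1.1, z.2)) z) := by
      refine Measurable.indicator (by fun_prop) ?_
      exact measurableSet_le (by fun_prop) (by fun_prop)
    exact (h2.stronglyMeasurable.integral_prod_right').measurable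
  have hτa : ∀ a, Measurable fun s => τ (a, s) := fun a => hτm.comp (by fun_prop)
  refine ⟨fun y => g (e y), hgm.comp e.measurable, ⟨M * d, ?_⟩, ?_, ?_⟩
  · intro y
    change |g (e y)| ≤ M * d
    have h1 : g (e y) = ∫ s in Icc (c (e y).1) (c (e y).1 + d) ∩ Iic (e y).2, τ ((e y).1, s) := by
      rw [hg]
      simp only
      rw [inter_comm]
      apply setIntegral_eq_of_subset_of_forall_sdiff_eq_zero measurableSet_Iic inter_subset_left
      rintro s ⟨h1, h2⟩
      exact hsupp _ _ fun h => h2 ⟨h1, h⟩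
    rw [h1, ← Real.norm_eq_abs]
    have hv : volume (Icc (c (e y).1) (c (e y).1 + d) ∩ Iic (e y).2) ≤ ENNReal.ofReal d :=
      (measure_mono inter_subset_left).trans (by simp)
    have hM0 : 0 ≤ M := (abs_nonneg _).trans (hM 0)
    refine (norm_setIntegral_le_of_norm_le_const (C := M) (hv.trans_lt ENNReal.ofReal_lt_top)
      (fun s _ => hM _)).trans ?_
    gcongr
    exact ENNReal.toReal_le_of_le_ofReal hd0 hv
  · have hVe : V = e ⁻¹' (e.symm ⁻¹' V) := by ext; simp
    have hVm' : MeasurableSet (e.symm ⁻¹' V) := e.symm.measurable hV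
    have L : ∫⁻ y in V, ‖g (e y)‖ₑ ^ p = ∫⁻ q in e.symm ⁻¹' V, ‖g q‖ₑ ^ p := by
      conv_lhs => rw [hVe]
      exact hmp.setLIntegral_comp_preimage hVm' (hgm.enorm.pow_const p)
    have R : ∫⁻ y in V, ‖σ y - 1‖ₑ ^ p = ∫⁻ q, ‖τ q‖ₑ ^ p := by
      rw [← lintegral_indicator hV]
      · rw [← hmps.lintegral_comp (((hσ.sub_const 1).enorm.pow_const p).indicator hV)]
        congr 1; funext q
        by_cases hq : e.symm q ∈ V
        · rw [indicator_of_mem hq]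
        · rw [indicator_of_notMem hq]
          simp [hτ, hσV _ hq, hp0]
    rw [L, R, ← lintegral_indicator hVm', Measure.volume_eq_prod,
      lintegral_prod _ ((hgm.enorm.pow_const p).indicator hVm').aemeasurable,
      lintegral_prod _ (hτm.enorm.pow_const p).aemeasurable,
      ← lintegral_const_mul _ (hτm.enorm.pow_const p).lintegral_prod_right']
    refine lintegral_mono fun a => ?_
    set Q := ∫⁻ s, ‖τ (a, s)‖ₑ ^ p with hQ
    calc ∫⁻ s, (e.symm ⁻¹' V).indicator (fun q => ‖g q‖ₑ ^ p) (a, s)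
        ≤ ∫⁻ s in Icc (c a) (c a + d), ENNReal.ofReal d ^ (p - 1) * Q := by
          rw [← lintegral_indicator measurableSet_Icc]
          refine lintegral_mono fun s => ?_
          by_cases hq : (a, s) ∈ e.symm ⁻¹' V
          · rw [indicator_of_mem hq, indicator_of_mem (hc a s hq)]
            exact one_dim_pow (hτa a) hp (hsupp a) s
          · rw [indicator_of_notMem hq]; exact zero_le
      _ = ENNReal.ofReal d ^ p * Q := by
          simp only [lintegral_const, MeasurableSet.univ, Measure.restrict_apply, univ_inter,
            Real.volume_Icc, add_sub_cancel_left]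
          rw [mul_right_comm]
          congr 1
          rcases hd0.eq_or_lt with h | h
          · subst h; simp [hp0]
          · have h1 := ENNReal.rpow_one (ENNReal.ofReal d)
            nth_rewrite 2 [← h1]
            rw [← ENNReal.rpow_add _ _ (by simpa using h) ENNReal.ofReal_ne_top]
            simp
  · intro h k hh
    set A : Set (Fin m → ℝ) := {a | ∀ j, ⌊a j / h⌋ = k (i.succAbove j)} with hA
    set I : Set ℝ := Ico (k i * h) ((k i + 1) * h) with hI
    have hAm : MeasurableSet A := by
      have : A = ⋂ j, {a | ⌊a j / h⌋ = k (i.succAbove j)} := by ext; simp [hA]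
      rw [this]
      refine MeasurableSet.iInter fun j => ?_
      exact (Int.measurable_floor.comp (by fun_prop : Measurable fun a : Fin m → ℝ => a j / h))
        (measurableSet_singleton _)
    have hcell : ∀ y, y ∈ cell h k ↔ e y ∈ A ×ˢ I := by
      intro y
      have : y ∈ cell h k ↔ ∀ j, ⌊y j / h⌋ = k j := by
        simp only [cell, mem_ofPred_eq, idx]; exact funext_iff
      rw [this, Fin.forall_iff_succAbove i, he, splitEquiv_apply, mem_prod]
      simp only [hA, hI, mem_ofPred_eq, mem_Ico, Int.floor_eq_iff, le_div_iff₀ hh, div_lt_iff₀ hh]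
      tauto
    have hvol : volume (cell h k) = volume A * ENNReal.ofReal h := by
      have : cell h k = e ⁻¹' (A ×ˢ I) := by ext y; exact hcell y
      rw [this, hmp.measure_preimage (hAm.prod measurableSet_Ico).nullMeasurableSet,
        Measure.volume_eq_prod, Measure.prod_prod, Real.volume_Ico]
      congr 2; ring
    set Z : Set ((Fin m → ℝ) × ℝ) := {q | q.1 ∈ A ∧ q.2 + g q ∈ I} with hZ
    have hZm : MeasurableSet Z :=
      (measurable_fst hAm).inter ((measurable_snd.add hgm) measurableSet_Ico)
    have hset : {y | y + g (e y) • EuclideanSpace.single i 1 ∈ cell h k} = e ⁻¹' Z := by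
      ext y
      rw [mem_ofPred_eq, hcell, he, splitEquiv_add]
      rfl
    have L : ∫⁻ y in {y | y + g (e y) • EuclideanSpace.single i 1 ∈ cell h k}, ENNReal.ofReal (σ y)
        = ∫⁻ q in Z, ENNReal.ofReal (1 + τ q) := by
      rw [hset, ← hmp.setLIntegral_comp_preimage hZm (by fun_prop)]
      congr 1; funext y; simp [hτ]
    rw [L, hvol, ← lintegral_indicator hZm, Measure.volume_eq_prod,
      lintegral_prod _ (Measurable.indicator (by fun_prop) hZm).aemeasurable]
    calc _ ≤ ∫⁻ a, A.indicator (fun _ => ENNReal.ofReal h) a := by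
          refine lintegral_mono fun a => ?_
          by_cases ha : a ∈ A
          · rw [indicator_of_mem ha]
            have := one_dim_mass (hτa a) (M := M) (a := c a) (d := d) (fun s => hM _)
              (fun s => by have := h0 (e.symm (a, s)); simp only [hτ]; linarith) (hsupp a)
              (k i * h) ((k i + 1) * h)
            have hm : MeasurableSet {t | t + (∫ s in Iic t, τ (a, s)) ∈ I} := by
              have hga : Measurable fun t => g (a, t) := hgm.comp (by fun_prop)
              exact (measurable_id.add hga) measurableSet_Ico
            rw [← hI, ← lintegral_indicator hm] at this
            refine (le_of_eq ?_).trans (this.trans (le_of_eq ?_))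
            · congr 1; funext s
              by_cases hs : s + (∫ s in Iic s, τ (a, s)) ∈ I
              · rw [indicator_of_mem (s := Z) ⟨ha, hs⟩, indicator_of_mem (by exact hs)]
              · rw [indicator_of_notMem (s := Z) (fun h => hs h.2), indicator_of_notMem (by exact hs)]
            · congr 1; ring
          · rw [indicator_of_notMem ha]
            refine (le_of_eq ?_)
            rw [lintegral_eq_zero_iff']
            · exact Eventually.of_forall fun s => indicator_of_notMem (fun h => ha h.1) _
            · exact ((Measurable.indicator (by fun_prop) hZm).comp
                (by fun_prop : Measurable fun s : ℝ => (a, s))).aemeasurable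
      _ = volume A * ENNReal.ofReal h := by
          rw [lintegral_indicator hAm]; simp [mul_comm]

end knothe2

section assemble
open Filter Topology
open scoped ENNReal

lemma multOn_eq_one {n : ℕ} {U : Set (EuclideanSpace ℝ (Fin n))}
    {S : EuclideanSpace ℝ (Fin n) → EuclideanSpace ℝ (Fin n)} (hS : InjOn S U)
    (hpos : volume (S '' U) ≠ 0) : multOn U S = 1 := by
  apply le_antisymm
  · refine essSup_le_of_ae_le _ (Eventually.of_forall fun y => ?_)
    refine Set.encard_le_one_iff.2 ?_
    rintro a b ⟨ha, ha'⟩ ⟨hb, hb'⟩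
    exact hS ha hb (ha'.trans hb'.symm)
  · by_contra hc
    rw [not_le] at hc
    have h1 := ae_le_essSup (f := fun y => (U ∩ S ⁻¹' {y}).encard)
      (μ := (volume : Measure (EuclideanSpace ℝ (Fin n))))
    apply hpos
    refine measure_mono_null ?_ (ae_iff.1 h1)
    rintro _ ⟨x, hx, rfl⟩ hle
    have h2 : (U ∩ S ⁻¹' {S x}).encard < 1 := lt_of_le_of_lt hle hc
    rw [ENat.lt_one_iff_eq_zero, Set.encard_eq_zero] at h2
    have : x ∈ U ∩ S ⁻¹' {S x} := ⟨hx, rfl⟩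
    rw [h2] at this
    exact this

lemma goodS_image {n : ℕ} {M : ℝ} {S : EuclideanSpace ℝ (Fin n) → EuclideanSpace ℝ (Fin n)}
    (hS : GoodS M S) {U : Set (EuclideanSpace ℝ (Fin n))} (hUo : IsOpen U) (hUb : IsBounded U)
    (hne : U.Nonempty) :
    ∃ Ks : NNReal, LipschitzOnWith Ks S U ∧ IsBounded (S '' U) ∧ multOn U S = 1 ∧
      (∃ B : Set (EuclideanSpace ℝ (Fin n)), MeasurableSet B ∧
            Measure.map S (volume.restrict U) = volume.restrict B) := by
  obtain ⟨K, hK⟩ := hS.lip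
  have hm : MeasurableSet (S '' U) :=
    hUo.measurableSet.image_of_continuousOn_injOn hK.continuous.continuousOn hS.inj.injOn
  refine ⟨K, hK.lipschitzOnWith, hK.isBounded_image hUb, ?_, S '' U, hm, ?_⟩
  · apply multOn_eq_one hS.inj.injOn
    rw [← hS.mp.measure_preimage hm.nullMeasurableSet, preimage_image_eq _ hS.inj]
    exact (hUo.measure_pos volume hne).ne'
  · have := hS.mp.restrict_preimage hm
    rw [preimage_image_eq _ hS.inj] at this
    exact this.map_eq

lemma main_ge2 {m : ℕ} (hn : 2 ≤ m + 1) {p : ℝ} (hp : 1 < p)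
    {U : Set (EuclideanSpace ℝ (Fin (m + 1)))}
    (hUo : IsOpen U) (hUb : IsBounded U) {K : NNReal}
    {u : EuclideanSpace ℝ (Fin (m + 1)) → EuclideanSpace ℝ (Fin (m + 1))}
    (hu : LipschitzWith K u) (hmult : multOn U u = 1) {d lam Lam : ℝ} (hd0 : 0 ≤ d)
    (hd : ∀ x ∈ U, ∀ y ∈ U, dist (u x) (u y) ≤ d) (hlam : 0 < lam)
    (hae : ∀ᵐ x ∂(volume.restrict U), DifferentiableAt ℝ u x ∧
            lam ≤ detD u x ∧ detD u x ≤ Lam) (η : ℝ≥0∞) (hη : 0 < η) :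
    ∃ M S, GoodS M S ∧ ∫⁻ x in U, ‖u x - S x‖ₑ ^ p ≤
      2 ^ (p - 1) * (2 ^ (p - 1) * (ENNReal.ofReal lam⁻¹ * (ENNReal.ofReal d ^ p *
        (ENNReal.ofReal (lam ^ (1 - p)) * ∫⁻ x in U, ‖1 - detD u x‖ₑ ^ p)))) + η := by
  have hp0 : 0 < p := by linarith
  obtain ⟨W, σ, hWm, hWU, hUW, hinj, hWd, hσm, hσW, hσV, hVm⟩ :=
    exists_cov hUo.measurableSet hu.continuous hmult hlam hae
  have hcov := cov_formula hWm hinj hlam (fun x hx => ⟨(hWd x hx).1, (hWd x hx).2.1⟩)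
  have hJ : ∀ x ∈ W, 0 < detD u x := fun x hx => hlam.trans_le (hWd x hx).2.1
  have hσb : ∀ y, 0 ≤ σ y ∧ |σ y - 1| ≤ 1 + lam⁻¹ := by
    intro y
    have hl : 0 < lam⁻¹ := inv_pos.2 hlam
    by_cases hy : y ∈ u '' W
    · obtain ⟨x, hx, rfl⟩ := hy
      rw [hσW x hx]
      have h1 : 0 < (detD u x)⁻¹ := inv_pos.2 (hJ x hx)
      have h2 : (detD u x)⁻¹ ≤ lam⁻¹ := inv_anti₀ hlam (hWd x hx).2.1
      refine ⟨h1.le, abs_le.2 ⟨by linarith, by linarith⟩⟩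
    · rw [hσV y hy]
      refine ⟨zero_le_one, ?_⟩
      simp; linarith
  obtain ⟨G, hGm, ⟨B, hB⟩, hGp, hGc⟩ := knothe (0 : Fin (m + 1)) hσm (fun y => (hσb y).1)
    (fun y => (hσb y).2) hVm hσV hd0 (by
      rintro _ ⟨x, hx, rfl⟩ _ ⟨y, hy, rfl⟩
      have h1 := coord_le_norm (u x - u y) 0
      have h2 := hd x (hWU hx) y (hWU hy)
      rw [dist_eq_norm] at h2
      exact h1.trans h2) hp
  set S0 : EuclideanSpace ℝ (Fin (m + 1)) → EuclideanSpace ℝ (Fin (m + 1)) :=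
    fun x => u x + G (u x) • EuclideanSpace.single 0 1 with hS0
  have hum : Measurable u := hu.continuous.measurable
  have hS0m : Measurable S0 := by
    have : Measurable fun x => G (u x) := hGm.comp hum
    exact hum.add (this.smul_const _)
  have hUWae : U =ᵐ[volume] W := by
    have := (ae_eq_set (s := U) (t := W) (μ := volume)).2 ⟨hUW, by rw [diff_eq_empty.2 hWU]; simp⟩
    exact this
  have hσJ : ∀ x ∈ W, ENNReal.ofReal (detD u x) * ENNReal.ofReal (σ (u x)) = 1 := by
    intro x hx
    rw [hσW x hx, ← ENNReal.ofReal_mul (hJ x hx).le, mul_inv_cancel₀ (hJ x hx).ne']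
    simp
  obtain ⟨R, hR⟩ := (hu.isBounded_image hUb).exists_norm_le
  obtain ⟨M, S, hS, hest⟩ := prop_approx hn hp U hUo hUb K u S0 hu hS0m (R + B) (by
    intro x hx
    refine (norm_add_le _ _).trans (add_le_add (hR _ ⟨x, hx, rfl⟩) ?_)
    rw [norm_smul]
    simpa using hB (u x)) (by
    intro h hh k
    set Y := {y | y + G y • EuclideanSpace.single 0 1 ∈ cell h k} with hY
    have hYm : MeasurableSet Y := by
      have : Measurable fun y => y + G y • (EuclideanSpace.single (0 : Fin (m+1)) (1 : ℝ)) :=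
        measurable_id.add (hGm.smul_const _)
      exact this (measurableSet_cell h k)
    have e1 : S0 ⁻¹' (cell h k) = u ⁻¹' Y := rfl
    rw [e1, measure_congr (hUWae.inter (ae_eq_refl (u ⁻¹' Y)))]
    calc volume (W ∩ u ⁻¹' Y) = ∫⁻ x in W, (u ⁻¹' Y).indicator 1 x := by
          rw [lintegral_indicator_one (hum hYm), Measure.restrict_apply (hum hYm), inter_comm]
      _ = ∫⁻ x in W, ENNReal.ofReal (detD u x) *
            (Y.indicator (fun y => ENNReal.ofReal (σ y)) (u x)) := by
          refine setLIntegral_congr_fun hWm fun x hx => ?_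
          by_cases hxY : u x ∈ Y
          · rw [indicator_of_mem (by exact hxY), indicator_of_mem hxY, hσJ x hx]; rfl
          · rw [indicator_of_notMem (by exact hxY), indicator_of_notMem hxY, mul_zero]
      _ = ∫⁻ y in u '' W, Y.indicator (fun y => ENNReal.ofReal (σ y)) y := (hcov _).symm
      _ ≤ ∫⁻ y, Y.indicator (fun y => ENNReal.ofReal (σ y)) y := setLIntegral_le_lintegral _ _
      _ = ∫⁻ y in Y, ENNReal.ofReal (σ y) := lintegral_indicator hYm _
      _ ≤ _ := hGc h k hh) η hη
  refine ⟨M, S, hS, hest.trans ?_⟩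
  gcongr
  calc ∫⁻ x in U, ‖u x - S0 x‖ₑ ^ p = ∫⁻ x in W, ‖G (u x)‖ₑ ^ p := by
        rw [setLIntegral_congr hUWae]
        congr 1; funext x
        have : u x - S0 x = -(G (u x) • EuclideanSpace.single 0 1) := by simp [hS0]
        rw [this, enorm_neg, enorm_smul]
        congr 1
        have h1 : ‖(EuclideanSpace.single 0 1 : EuclideanSpace ℝ (Fin (m+1)))‖ₑ = 1 := by
          rw [← ofReal_norm]; simp
        rw [h1, mul_one]
    _ = ∫⁻ x in W, ENNReal.ofReal (detD u x) * (ENNReal.ofReal (σ (u x)) * ‖G (u x)‖ₑ ^ p) := by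
        refine setLIntegral_congr_fun hWm fun x hx => ?_
        rw [← mul_assoc, hσJ x hx, one_mul]
    _ = ∫⁻ y in u '' W, ENNReal.ofReal (σ y) * ‖G y‖ₑ ^ p :=
        (hcov (fun y => ENNReal.ofReal (σ y) * ‖G y‖ₑ ^ p)).symm
    _ ≤ ∫⁻ y in u '' W, ENNReal.ofReal lam⁻¹ * ‖G y‖ₑ ^ p := by
        refine setLIntegral_mono' hVm ?_
        rintro _ ⟨x, hx, rfl⟩
        gcongr
        rw [hσW x hx]
        exact inv_anti₀ hlam (hWd x hx).2.1
    _ = ENNReal.ofReal lam⁻¹ * ∫⁻ y in u '' W, ‖G y‖ₑ ^ p :=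
        lintegral_const_mul _ (hGm.enorm.pow_const p)
    _ ≤ ENNReal.ofReal lam⁻¹ * (ENNReal.ofReal d ^ p * ∫⁻ y in u '' W, ‖σ y - 1‖ₑ ^ p) := by
        gcongr
    _ ≤ _ := by
        gcongr
        have hmJ : Measurable fun x => ‖1 - detD u x‖ₑ ^ p :=
          (measurable_const.sub (measurable_detD u)).enorm.pow_const p
        rw [hcov (fun y => ‖σ y - 1‖ₑ ^ p), setLIntegral_congr hUWae,
          ← lintegral_const_mul _ hmJ]
        refine setLIntegral_mono' hWm fun x hx => ?_
        have hJx := hJ x hx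
        rw [hσW x hx, Real.enorm_eq_ofReal_abs, Real.enorm_eq_ofReal_abs,
          ENNReal.ofReal_rpow_of_nonneg (abs_nonneg _) hp0.le,
          ENNReal.ofReal_rpow_of_nonneg (abs_nonneg _) hp0.le, ← ENNReal.ofReal_mul hJx.le,
          ← ENNReal.ofReal_mul (by positivity)]
        apply ENNReal.ofReal_le_ofReal
        have e1 : (detD u x)⁻¹ - 1 = (1 - detD u x) / detD u x := by field_simp
        rw [e1, abs_div, abs_of_pos hJx, Real.div_rpow (abs_nonneg _) hJx.le]
        have e2 : detD u x * (|1 - detD u x| ^ p / detD u x ^ p) =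
            detD u x ^ (1 - p) * |1 - detD u x| ^ p := by
          rw [Real.rpow_sub hJx, Real.rpow_one]; ring
        rw [e2]
        exact mul_le_mul_of_nonneg_right
          (Real.rpow_le_rpow_of_nonpos hlam (hWd x hx).2.1 (by linarith)) (by positivity)

end assemble

section oneD
open Filter Topology
open scoped ENNReal

lemma oneD_est {I : Set ℝ} (hI : I.OrdConnected) {K : NNReal} {f : ℝ → ℝ}
    (hf : LipschitzWith K f) {t0 t : ℝ} (h0 : t0 ∈ I) (ht : t ∈ I) :
    ‖(f t - f t0) - (t - t0)‖ₑ ≤ ∫⁻ s in I, ‖1 - deriv f s‖ₑ := by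
  have hac : AbsolutelyContinuousOnInterval f t0 t := hf.lipschitzOnWith.absolutelyContinuousOnInterval
  have h1 : (f t - f t0) - (t - t0) = ∫ s in t0..t, (deriv f s - 1) := by
    rw [intervalIntegral.integral_sub hac.intervalIntegrable_deriv intervalIntegrable_const,
      hac.integral_deriv_eq_sub]
    simp
  have h2 : ‖∫ s in t0..t, (deriv f s - 1)‖ₑ = ‖∫ s in uIoc t0 t, (deriv f s - 1)‖ₑ := by
    rw [← ofReal_norm, ← ofReal_norm, intervalIntegral.norm_integral_eq_norm_integral_uIoc]
  rw [h1, h2]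
  refine (enorm_integral_le_lintegral_enorm _).trans ?_
  have h3 : uIoc t0 t ⊆ I := uIoc_subset_uIcc.trans (hI.uIcc_subset h0 ht)
  refine (lintegral_mono_set h3).trans (le_of_eq ?_)
  congr 1; funext s
  rw [← enorm_neg, neg_sub]

lemma oneD_vol {I : Set ℝ} (hI : I.OrdConnected) {K : NNReal} {f : ℝ → ℝ}
    (hf : LipschitzWith K f) {d lam : ℝ} (hlam : 0 < lam)
    (hd : ∀ s ∈ I, ∀ t ∈ I, |f s - f t| ≤ d)
    (hae : ∀ᵐ s ∂(volume.restrict I), lam ≤ deriv f s) :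
    volume I ≤ ENNReal.ofReal (d / lam) := by
  have key : ∀ s ∈ I, ∀ t ∈ I, s ≤ t → t - s ≤ d / lam := by
    intro s hs t ht hst
    have hac : AbsolutelyContinuousOnInterval f s t :=
      hf.lipschitzOnWith.absolutelyContinuousOnInterval
    rw [le_div_iff₀ hlam]
    have h1 : ∫ x in s..t, lam ≤ ∫ x in s..t, deriv f x := by
      refine intervalIntegral.integral_mono_ae_restrict hst intervalIntegrable_const
        hac.intervalIntegrable_deriv ?_
      exact ae_restrict_of_ae_restrict_of_subset (hI.out hs ht) hae
    rw [hac.integral_deriv_eq_sub] at h1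
    simp at h1
    have := (abs_le.1 (hd t ht s hs)).2
    linarith
  refine (Real.volume_le_diam I).trans ?_
  refine ediam_le fun s hs t ht => ?_
  rw [edist_dist]
  apply ENNReal.ofReal_le_ofReal
  rw [Real.dist_eq]
  rcases le_total s t with h | h
  · rw [abs_sub_comm, abs_of_nonneg (by linarith)]; exact key s hs t ht h
  · rw [abs_of_nonneg (by linarith)]; exact key t ht s hs h

lemma detD_one (u : EuclideanSpace ℝ (Fin 1) → EuclideanSpace ℝ (Fin 1)) {t : ℝ}
    (hu : DifferentiableAt ℝ u (EuclideanSpace.single 0 t)) :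
    HasDerivAt (fun s : ℝ => u (EuclideanSpace.single 0 s) 0) (detD u (EuclideanSpace.single 0 t)) t := by
  have h1 : detD u (EuclideanSpace.single 0 t) =
      (fderiv ℝ u (EuclideanSpace.single 0 t) (EuclideanSpace.single 0 1)) 0 := by
    unfold detD
    rw [← LinearMap.det_toMatrix (EuclideanSpace.basisFun (Fin 1) ℝ).toBasis, Matrix.det_fin_one,
      LinearMap.toMatrix_apply]
    simp
  rw [h1]
  have h2 : HasDerivAt (fun s : ℝ => (EuclideanSpace.single 0 s : EuclideanSpace ℝ (Fin 1)))
      (EuclideanSpace.single 0 1) t := by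
    have : (fun s : ℝ => (EuclideanSpace.single 0 s : EuclideanSpace ℝ (Fin 1))) =
        fun s => s • EuclideanSpace.single 0 1 := by
      funext s; ext i; fin_cases i; simp
    rw [this]
    simpa using (hasDerivAt_id t).smul_const (EuclideanSpace.single 0 1 : EuclideanSpace ℝ (Fin 1))
  have h3 := hu.hasFDerivAt.comp_hasDerivAt t h2
  exact ((EuclideanSpace.proj (0 : Fin 1) : EuclideanSpace ℝ (Fin 1) →L[ℝ] ℝ).hasFDerivAt.comp_hasDerivAt t h3)

lemma main_one {p : ℝ} (hp : 1 < p)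
    {U : Set (EuclideanSpace ℝ (Fin 1))} (hne : U.Nonempty)
    (hUo : IsOpen U) (hUc : IsConnected U) {K : NNReal}
    {u : EuclideanSpace ℝ (Fin 1) → EuclideanSpace ℝ (Fin 1)}
    (hu : LipschitzWith K u) {d lam Lam : ℝ} (hd0 : 0 ≤ d)
    (hd : ∀ x ∈ U, ∀ y ∈ U, dist (u x) (u y) ≤ d) (hlam : 0 < lam)
    (hae : ∀ᵐ x ∂(volume.restrict U), DifferentiableAt ℝ u x ∧
            lam ≤ detD u x ∧ detD u x ≤ Lam) :
    ∃ M S, GoodS M S ∧ ∫⁻ x in U, ‖u x - S x‖ₑ ^ p ≤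
      ENNReal.ofReal (d / lam) ^ p * ∫⁻ x in U, ‖1 - detD u x‖ₑ ^ p := by
  have hp0 : 0 < p := by linarith
  obtain ⟨x0, hx0⟩ := hne
  set c := u x0 - x0 with hc
  set f : ℝ → ℝ := fun s => u (EuclideanSpace.single 0 s) 0 with hf
  have hsing : ∀ x : EuclideanSpace ℝ (Fin 1), EuclideanSpace.single 0 (x 0) = x := by
    intro x; ext i; fin_cases i; simp
  have hiso : ∀ x : EuclideanSpace ℝ (Fin 1), ‖x‖ = |x 0| := by
    intro x; rw [← hsing x]; simp
  have hfl : LipschitzWith K f := by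
    refine LipschitzWith.of_dist_le_mul fun s t => ?_
    have h1 := hu.dist_le_mul (EuclideanSpace.single 0 s) (EuclideanSpace.single 0 t)
    rw [dist_eq_norm, dist_eq_norm, hiso, hiso] at h1
    simpa [Real.dist_eq] using h1
  set I : Set ℝ := (fun x : EuclideanSpace ℝ (Fin 1) => x 0) '' U with hI
  have hIU : U = (fun x : EuclideanSpace ℝ (Fin 1) => x 0) ⁻¹' I := by
    ext x
    constructor
    · exact fun h => ⟨x, h, rfl⟩
    · rintro ⟨y, hy, hyx⟩
      simp only at hyx
      rw [← hsing x, ← hyx, hsing y]; exact hy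
  have hco : Continuous (fun x : EuclideanSpace ℝ (Fin 1) => x 0) := by fun_prop
  have hIo : I.OrdConnected := (hUc.isPreconnected.image _ hco.continuousOn).ordConnected
  have hsc : Continuous (fun s : ℝ => (EuclideanSpace.single 0 s : EuclideanSpace ℝ (Fin 1))) := by
    have : (fun s : ℝ => (EuclideanSpace.single 0 s : EuclideanSpace ℝ (Fin 1))) =
        fun s => s • EuclideanSpace.single 0 1 := by
      funext s; ext i; fin_cases i; simp
    rw [this]; fun_prop
  have hIU2 : I = (fun s : ℝ => (EuclideanSpace.single 0 s : EuclideanSpace ℝ (Fin 1))) ⁻¹' U := by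
    ext s
    constructor
    · rintro ⟨y, hy, rfl⟩
      simp only [mem_preimage]; rw [hsing]; exact hy
    · intro h; exact ⟨_, h, by simp⟩
  have hIm : MeasurableSet I := by
    rw [hIU2]; exact (hUo.preimage hsc).measurableSet
  have hmp : MeasurePreserving (fun x : EuclideanSpace ℝ (Fin 1) => x 0) volume volume :=
    (volume_preserving_funUnique (Fin 1) ℝ).comp
      (EuclideanSpace.volume_preserving_symm_measurableEquiv_toLp (Fin 1))
  have hmpU : MeasurePreserving (fun x : EuclideanSpace ℝ (Fin 1) => x 0) (volume.restrict U)
      (volume.restrict I) := by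
    have := hmp.restrict_preimage hIm
    rwa [← hIU] at this
  have hderU : ∀ᵐ x ∂(volume.restrict U), deriv f (x 0) = detD u x := by
    filter_upwards [hae] with x hx
    have h := detD_one u (t := x 0) (by rw [hsing]; exact hx.1)
    rw [hsing] at h
    exact h.deriv
  have hdm : Measurable (deriv f) := measurable_deriv f
  have haeI : ∀ᵐ s ∂(volume.restrict I), lam ≤ deriv f s := by
    rw [← hmpU.map_eq, ae_map_iff hmpU.aemeasurable (measurableSet_le measurable_const hdm)]
    filter_upwards [hae, hderU] with x hx h2
    rw [h2]; exact hx.2.1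
  have hE : ∫⁻ s in I, ‖1 - deriv f s‖ₑ ^ p = ∫⁻ x in U, ‖1 - detD u x‖ₑ ^ p := by
    rw [← hmpU.lintegral_comp (f := fun s => ‖1 - deriv f s‖ₑ ^ p) (by fun_prop)]
    refine lintegral_congr_ae ?_
    filter_upwards [hderU] with x hx
    rw [hx]
  have hvU : volume U = volume I := by
    conv_lhs => rw [hIU]
    exact hmp.measure_preimage hIm.nullMeasurableSet
  have hvol : volume I ≤ ENNReal.ofReal (d / lam) := by
    refine oneD_vol hIo hfl hlam ?_ haeI
    rintro _ ⟨x, hx, rfl⟩ _ ⟨y, hy, rfl⟩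
    have := hd x hx y hy
    rw [dist_eq_norm, hiso] at this
    simp only [hf]
    rw [hsing, hsing]
    exact this
  refine ⟨‖c‖, fun x => x + c, ⟨⟨1, LipschitzWith.of_dist_le_mul fun x y => by simp⟩,
    add_left_injective c, measurePreserving_add_right volume c, fun x => by simp⟩, ?_⟩
  calc ∫⁻ x in U, ‖u x - (x + c)‖ₑ ^ p ≤ ∫⁻ x in U, (∫⁻ s in I, ‖1 - deriv f s‖ₑ) ^ p := by
        refine setLIntegral_mono' hUo.measurableSet fun x hx => ?_
        refine ENNReal.rpow_le_rpow ?_ hp0.le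
        have h1 := oneD_est hIo hfl (t0 := x0 0) (t := x 0) ⟨x0, hx0, rfl⟩ ⟨x, hx, rfl⟩
        refine (le_of_eq ?_).trans h1
        rw [← ofReal_norm, hiso, ← ofReal_norm, Real.norm_eq_abs]
        congr 2
        simp only [hf, hc]
        rw [hsing, hsing]
        simp; ring
    _ = volume I * (∫⁻ s in I, ‖1 - deriv f s‖ₑ) ^ p := by
        rw [setLIntegral_const, hvU, mul_comm]
    _ ≤ volume I * (volume.restrict I univ ^ (p - 1) * ∫⁻ s in I, ‖1 - deriv f s‖ₑ ^ p) := by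
        gcongr
        exact lintegral_pow_le _ hp (by fun_prop)
    _ ≤ ENNReal.ofReal (d / lam) * (ENNReal.ofReal (d / lam) ^ (p - 1) *
          ∫⁻ s in I, ‖1 - deriv f s‖ₑ ^ p) := by
        gcongr
        simpa using hvol
    _ = _ := by
        rw [hE, ← mul_assoc]
        congr 1
        have hdl : 0 ≤ d / lam := by positivity
        rcases hdl.eq_or_lt with h | h
        · rw [← h]; simp [hp0]
        · have h1 := ENNReal.rpow_one (ENNReal.ofReal (d / lam))
          nth_rewrite 1 [← h1]
          rw [← ENNReal.rpow_add _ _ (by simpa using h) ENNReal.ofReal_ne_top]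
          simp

end oneD

section final
open Filter Topology
open scoped ENNReal

lemma d_pos {n : ℕ} (hn : 1 ≤ n) {U : Set (EuclideanSpace ℝ (Fin n))} (hne : U.Nonempty)
    (hUo : IsOpen U) {u : EuclideanSpace ℝ (Fin n) → EuclideanSpace ℝ (Fin n)} {d lam Lam : ℝ}
    (hd0 : 0 ≤ d) (hd : ∀ x ∈ U, ∀ y ∈ U, dist (u x) (u y) ≤ d) (hlam : 0 < lam)
    (hae : ∀ᵐ x ∂(volume.restrict U), DifferentiableAt ℝ u x ∧
            lam ≤ detD u x ∧ detD u x ≤ Lam) : 0 < d ∧ lam ≤ Lam := by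
  have hpos : volume U ≠ 0 := (hUo.measure_pos volume hne).ne'
  have hex : ∃ x ∈ U, lam ≤ detD u x ∧ detD u x ≤ Lam := by
    rw [ae_restrict_iff' hUo.measurableSet] at hae
    by_contra hc
    push Not at hc
    apply hpos
    refine measure_mono_null ?_ (ae_iff.1 hae)
    intro x hx hx2
    have h := hx2 hx
    exact absurd h.2.2 (not_le.2 (hc x hx h.2.1))
  obtain ⟨x, hx, h1, h2⟩ := hex
  refine ⟨lt_of_le_of_ne hd0 ?_, h1.trans h2⟩
  rintro rfl
  have h3 : u =ᶠ[𝓝 x] fun _ => u x := by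
    filter_upwards [hUo.mem_nhds hx] with y hy
    exact dist_le_zero.1 (hd y hy x hx)
  have h4 : fderiv ℝ u x = 0 := by
    rw [h3.fderiv_eq]; simp
  have h5 : detD u x = 0 := by
    unfold detD
    rw [h4]
    have : (0 : EuclideanSpace ℝ (Fin n) →L[ℝ] EuclideanSpace ℝ (Fin n)).toLinearMap = 0 := rfl
    rw [this, LinearMap.det_zero]
    simp; omega
  linarith

lemma core {n : ℕ} (hn : 1 ≤ n) {p : ℝ} (hp : 1 < p)
    {U : Set (EuclideanSpace ℝ (Fin n))} (hne : U.Nonempty)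
    (hUo : IsOpen U) (hUb : IsBounded U) (hUc : IsConnected U) {K : NNReal}
    {u : EuclideanSpace ℝ (Fin n) → EuclideanSpace ℝ (Fin n)}
    (hu : LipschitzWith K u) (hmult : multOn U u = 1) {d lam Lam : ℝ} (hd0 : 0 ≤ d)
    (hd : ∀ x ∈ U, ∀ y ∈ U, dist (u x) (u y) ≤ d) (hlam : 0 < lam)
    (hae : ∀ᵐ x ∂(volume.restrict U), DifferentiableAt ℝ u x ∧
            lam ≤ detD u x ∧ detD u x ≤ Lam) :
    ∃ (S : EuclideanSpace ℝ (Fin n) → EuclideanSpace ℝ (Fin n)) (Ks : NNReal),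
          LipschitzOnWith Ks S U ∧ IsBounded (S '' U) ∧
          multOn U S = 1 ∧
          (∃ B : Set (EuclideanSpace ℝ (Fin n)), MeasurableSet B ∧
            Measure.map S (volume.restrict U) = volume.restrict B) ∧
          (∫ x in U, ‖u x - S x‖ ^ p)
            ≤ (4 ^ (p - 1) + 1) * (d ^ p * (lam ^ p)⁻¹ * ∫ x in U, |1 - detD u x| ^ p) := by
  have hp0 : 0 < p := by linarith
  have hUm := hUo.measurableSet
  obtain ⟨hdpos, -⟩ := d_pos hn hne hUo hd0 hd hlam hae
  have : IsFiniteMeasure (volume.restrict U) := ⟨by simpa using hUb.measure_lt_top⟩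
  have hmJ : Measurable fun x => |1 - detD u x| ^ p := by
    have := measurable_detD u
    fun_prop
  have hEint : Integrable (fun x => |1 - detD u x| ^ p) (volume.restrict U) := by
    refine Integrable.of_bound hmJ.aestronglyMeasurable ((1 + |Lam|) ^ p) ?_
    filter_upwards [hae] with x hx
    rw [Real.norm_eq_abs, abs_of_nonneg (by positivity)]
    refine Real.rpow_le_rpow (abs_nonneg _) ?_ hp0.le
    have := le_abs_self Lam
    rw [abs_le]
    constructor <;> linarith [hx.2.1, hx.2.2]
  set E := ∫ x in U, |1 - detD u x| ^ p with hE
  have hE0 : 0 ≤ E := integral_nonneg fun x => by positivity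
  have hElin : ∫⁻ x in U, ‖1 - detD u x‖ₑ ^ p = ENNReal.ofReal E := by
    rw [hE, ofReal_integral_eq_lintegral_ofReal hEint (Eventually.of_forall fun x => by positivity)]
    congr 1; funext x
    rw [Real.enorm_eq_ofReal_abs, ENNReal.ofReal_rpow_of_nonneg (abs_nonneg _) hp0.le]
  have conv : ∀ (M : ℝ) (S : EuclideanSpace ℝ (Fin n) → EuclideanSpace ℝ (Fin n)), GoodS M S →
      ∀ Z : ℝ, 0 ≤ Z → ∫⁻ x in U, ‖u x - S x‖ₑ ^ p ≤ ENNReal.ofReal Z →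
      ∫ x in U, ‖u x - S x‖ ^ p ≤ Z := by
    intro M S hS Z hZ hle
    obtain ⟨K', hK'⟩ := hS.lip
    have hm : Measurable fun x => ‖u x - S x‖ ^ p :=
      ((hu.continuous.sub hK'.continuous).measurable.norm).pow_const p
    rw [integral_eq_lintegral_of_nonneg_ae (Eventually.of_forall fun x => by positivity)
      hm.aestronglyMeasurable]
    apply ENNReal.toReal_le_of_le_ofReal hZ
    refine (le_of_eq ?_).trans hle
    congr 1; funext x
    rw [← ofReal_norm, ENNReal.ofReal_rpow_of_nonneg (norm_nonneg _) hp0.le]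
  have hQ0 : 0 ≤ d ^ p * (lam ^ p)⁻¹ * E := by positivity
  have h41 : (0:ℝ) < 4 ^ (p - 1) := by positivity
  rcases hE0.eq_or_lt with hz | hEpos
  · -- the Jacobian is one almost everywhere
    obtain ⟨W, σ, hWm, hWU, hUW, hinj, hWd, hσm, hσW, hσV, hVm⟩ :=
      exists_cov hUm hu.continuous hmult hlam hae
    have hcov := cov_formula hWm hinj hlam (fun x hx => ⟨(hWd x hx).1, (hWd x hx).2.1⟩)
    have hJ1 : ∀ᵐ x ∂(volume.restrict U), detD u x = 1 := by
      have h1 := (integral_eq_zero_iff_of_nonneg (fun x => by positivity) hEint).1 hz.symm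
      filter_upwards [h1] with x hx
      simp only [Pi.zero_apply] at hx
      rw [Real.rpow_eq_zero (abs_nonneg _) hp0.ne', abs_eq_zero] at hx
      linarith
    have hUWae : U =ᵐ[volume] W := 
      (ae_eq_set (s := U) (t := W) (μ := volume)).2 ⟨hUW, by rw [diff_eq_empty.2 hWU]; simp⟩
    refine ⟨u, K, hu.lipschitzOnWith, hu.isBounded_image hUb, hmult, ⟨u '' W, hVm, ?_⟩, ?_⟩
    · ext A hA
      have hum := hu.continuous.measurable
      rw [Measure.map_apply hum hA, Measure.restrict_congr_set hUWae, Measure.restrict_apply hA,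
        ← lintegral_indicator_one (hum hA), ← Measure.restrict_apply hA,
        ← lintegral_indicator_one hA, hcov]
      refine lintegral_congr_ae ?_
      rw [Measure.restrict_congr_set hUWae] at hJ1
      filter_upwards [hJ1] with x hx
      rw [hx]
      simp only [ENNReal.ofReal_one, one_mul]
      rfl
    · simp only [sub_self, norm_zero, Real.zero_rpow hp0.ne', integral_zero]
      positivity
  · rcases hn.eq_or_lt with h1 | h2
    · subst h1
      obtain ⟨M, S, hS, hle⟩ := main_one hp hne hUo hUc hu hd0 hd hlam hae
      obtain ⟨Ks, a1, a2, a3, a4⟩ := goodS_image hS hUo hUb hne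
      refine ⟨S, Ks, a1, a2, a3, a4, ?_⟩
      refine (conv M S hS (d ^ p * (lam ^ p)⁻¹ * E) hQ0 ?_).trans ?_
      · rw [hElin, ENNReal.ofReal_rpow_of_nonneg (by positivity) hp0.le,
          ← ENNReal.ofReal_mul (by positivity), Real.div_rpow hd0 hlam.le, div_eq_mul_inv] at hle
        exact hle
      · nlinarith
    · obtain ⟨m, rfl⟩ : ∃ m, n = m + 1 := ⟨n - 1, by omega⟩
      set Q := d ^ p * (lam ^ p)⁻¹ * E with hQ
      have hQpos : 0 < Q := by positivity
      obtain ⟨M, S, hS, hle⟩ := main_ge2 (by omega) hp hUo hUb hu hmult hd0 hd hlam hae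
        (ENNReal.ofReal Q) (by simpa using hQpos)
      obtain ⟨Ks, a1, a2, a3, a4⟩ := goodS_image hS hUo hUb hne
      refine ⟨S, Ks, a1, a2, a3, a4, ?_⟩
      refine conv M S hS _ (by positivity) ?_
      refine hle.trans (le_of_eq ?_)
      have e2 : (2 : ℝ≥0∞) ^ (p - 1) = ENNReal.ofReal (2 ^ (p - 1)) := by
        rw [← ENNReal.ofReal_rpow_of_pos (by norm_num)]; norm_num
      rw [hElin, e2, ENNReal.ofReal_rpow_of_nonneg hd0 hp0.le,
        ← ENNReal.ofReal_mul (by positivity), ← ENNReal.ofReal_mul (by positivity),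
        ← ENNReal.ofReal_mul (by positivity), ← ENNReal.ofReal_mul (by positivity),
        ← ENNReal.ofReal_mul (by positivity), ← ENNReal.ofReal_add (by positivity) (by positivity)]
      congr 1
      have e4 : (4:ℝ) ^ (p - 1) = 2 ^ (p - 1) * 2 ^ (p - 1) := by
        rw [← Real.mul_rpow (by norm_num) (by norm_num)]; norm_num
      have e5 : lam ^ (1 - p) = lam * (lam ^ p)⁻¹ := by
        rw [Real.rpow_sub hlam, Real.rpow_one]; rfl
      rw [e4, e5, hQ]
      field_simp

lemma factor_le {n : ℕ} (hn : 1 ≤ n) {p lam Lam d : ℝ} (hp : 1 < p) (hlam : 0 < lam)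
    (hL : lam ≤ Lam) (hd0 : 0 ≤ d) :
    d ^ p * (lam ^ p)⁻¹ ≤ (d / lam ^ ((n : ℝ))⁻¹) ^ p *
                (1 + (lam ^ p)⁻¹ * (Lam / lam) ^ (2 * p - 2)) := by
  have hp0 : 0 < p := by linarith
  have hX : 1 ≤ (Lam / lam) ^ (2 * p - 2) :=
    Real.one_le_rpow ((one_le_div hlam).2 hL) (by linarith)
  set X := (Lam / lam) ^ (2 * p - 2)
  have hn' : (1:ℝ) ≤ n := by exact_mod_cast hn
  have hni : ((n:ℝ))⁻¹ ≤ 1 := inv_le_one_of_one_le₀ hn'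
  have hni0 : 0 ≤ ((n:ℝ))⁻¹ := by positivity
  have hr : 0 < lam ^ ((n : ℝ))⁻¹ := by positivity
  rw [Real.div_rpow hd0 hr.le, div_eq_mul_inv, mul_assoc]
  refine mul_le_mul_of_nonneg_left ?_ (by positivity)
  set r := lam ^ ((n : ℝ))⁻¹ with hrdef
  have hi : 0 < (lam ^ p)⁻¹ := by positivity
  have hri : 0 < (r ^ p)⁻¹ := by positivity
  rcases le_total 1 lam with h | h
  · have h1 : r ≤ lam := by
      calc r ≤ lam ^ (1:ℝ) := Real.rpow_le_rpow_of_exponent_le h hni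
        _ = lam := Real.rpow_one _
    have h2 : (lam ^ p)⁻¹ ≤ (r ^ p)⁻¹ :=
      inv_anti₀ (by positivity) (Real.rpow_le_rpow hr.le h1 hp0.le)
    have : 0 ≤ (lam ^ p)⁻¹ * X := by positivity
    nlinarith
  · have h1 : r ≤ 1 := Real.rpow_le_one hlam.le h hni0
    have h2 : 1 ≤ (r ^ p)⁻¹ :=
      (one_le_inv₀ (by positivity)).2 (Real.rpow_le_one hr.le h1 hp0.le)
    have h3 : (lam ^ p)⁻¹ ≤ (lam ^ p)⁻¹ * X := le_mul_of_one_le_right hi.le hX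
    nlinarith

end final

theorem stmt_3 (n : ℕ) (hn : 1 ≤ n) (p : ℝ) (hp : 1 < p) :
    ∃ C₃ : ℝ, 0 < C₃ ∧
      ∀ (U : Set (EuclideanSpace ℝ (Fin n))), U.Nonempty → IsOpen U →
        IsBounded U → IsConnected U →
      ∀ (u : EuclideanSpace ℝ (Fin n) → EuclideanSpace ℝ (Fin n)) (K : NNReal),
        LipschitzOnWith K u U → IsBounded (u '' U) →
        multOn U u = 1 →
      ∀ (d lam Lam : ℝ),
        diam (u '' U) ≤ d →
        0 < lam →
        (∀ᵐ x ∂(volume.restrict U), DifferentiableAt ℝ u x ∧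
            lam ≤ detD u x ∧ detD u x ≤ Lam) →
        ∃ (S : EuclideanSpace ℝ (Fin n) → EuclideanSpace ℝ (Fin n)) (Ks : NNReal),
          LipschitzOnWith Ks S U ∧ IsBounded (S '' U) ∧
          multOn U S = 1 ∧
          (∃ B : Set (EuclideanSpace ℝ (Fin n)), MeasurableSet B ∧
            Measure.map S (volume.restrict U) = volume.restrict B) ∧
          (∫ x in U, ‖u x - S x‖ ^ p)
            ≤ C₃ * (d / lam ^ ((n : ℝ))⁻¹) ^ p *
                (1 + (lam ^ p)⁻¹ * (Lam / lam) ^ (2 * p - 2)) *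
              ∫ x in U, |1 - detD u x| ^ p := by
  refine ⟨4 ^ (p - 1) + 1, by positivity, ?_⟩
  intro U hne hUo hUb hUc u K hu hbd hmult d lam Lam hdiam hlam hae
  have hUm := hUo.measurableSet
  obtain ⟨v, hv, huv⟩ := hu.extend_finite_dimension
  have hd0 : 0 ≤ d := diam_nonneg.trans hdiam
  have hd : ∀ x ∈ U, ∀ y ∈ U, dist (u x) (u y) ≤ d := fun x hx y hy =>
    (dist_le_diam_of_mem hbd ⟨x, hx, rfl⟩ ⟨y, hy, rfl⟩).trans hdiam
  have hev : ∀ x ∈ U, u =ᶠ[nhds x] v := fun x hx => by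
    filter_upwards [hUo.mem_nhds hx] with y hy using huv hy
  have hdet : ∀ x ∈ U, detD v x = detD u x := fun x hx => by
    unfold detD; rw [(hev x hx).fderiv_eq]
  have hmultv : multOn U v = 1 := by
    rw [← hmult]
    unfold multOn
    congr 1; funext y; congr 1
    ext x
    constructor
    · rintro ⟨hx, h⟩; exact ⟨hx, (huv hx).trans h⟩
    · rintro ⟨hx, h⟩; exact ⟨hx, (huv hx).symm.trans h⟩
  obtain ⟨-, hL⟩ := d_pos hn hne hUo hd0 hd hlam hae
  obtain ⟨S, Ks, a1, a2, a3, a4, hle⟩ := core hn hp hne hUo hUb hUc hv hmultv (Lam := Lam) hd0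
    (fun x hx y hy => by rw [← huv hx, ← huv hy]; exact hd x hx y hy) hlam (by
      filter_upwards [hae, ae_restrict_mem hUm] with x hx hxU
      rw [hdet x hxU]
      exact ⟨(hev x hxU).differentiableAt_iff.1 hx.1, hx.2⟩)
  refine ⟨S, Ks, a1, a2, a3, a4, ?_⟩
  have e1 : ∫ x in U, ‖u x - S x‖ ^ p = ∫ x in U, ‖v x - S x‖ ^ p :=
    setIntegral_congr_fun hUm fun x hx => by simp only [huv hx]
  have e2 : ∫ x in U, |1 - detD v x| ^ p = ∫ x in U, |1 - detD u x| ^ p :=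
    setIntegral_congr_fun hUm fun x hx => by simp only [hdet x hx]
  rw [e2] at hle
  rw [e1]
  refine hle.trans ?_
  have hE0 : 0 ≤ ∫ x in U, |1 - detD u x| ^ p := integral_nonneg fun x => by positivity
  have h3 := mul_le_mul_of_nonneg_right (factor_le hn hp hlam hL hd0) hE0
  have h4 := mul_le_mul_of_nonneg_left h3 (by positivity : (0:ℝ) ≤ 4 ^ (p - 1) + 1)
  refine h4.trans (le_of_eq ?_)
  ring

end
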